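/- arXiv:1612.06618 — 2 statements merged into one kernel-verified Lean document; each statement's English description precedes it below -/
import Mathlib

section
/- Fix ν > 0. Then as α → ∞, the Poisson expectation E[f_α(X_α)] = Σ_{n=0}^∞ e^(−α)·(α^n/n!) · (α^n · e^(−α) · √(2πα) / n!)^(ν−1) satisfies E[f_α(X_α)] = ν^(−1/2) + O(α^(−1)). Precisely: there exist constants C > 0 and A > 0 (depending only on ν) such that for all α ≥ A, |Σ_{n=0}^∞ e^(−α)·(α^n/n!)·(α^n·e^(−α)·√(2πα)/n!)^(ν−1) − 1/√ν| ≤ C·α^(−1). -/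
open scoped BigOperators

/-!
Let `T(ν, α)` be the expectation, and let `y = n / α - 1` for `n` drawn from the
Conway–Maxwell–Poisson distribution, whose weights are `(αⁿ / n!) ^ ν`. Then `log T` has
`α`-derivative `ν E[y] + (ν - 1) / (2α)`. Stein's identity `E[(1 + y) ^ ν g(n)] = E[g(n + 1)]`,
applied to powers of `y`, gives `E[y ^ k] = O(α ^ (-k / 2))` by induction, and with the binomial
expansion of `(1 + y) ^ ν` it shows that this derivative is `O(α⁻²)`. Hence
`log T(ν, α) = ℓ(ν) + O(α⁻¹)` for some `ℓ`.

By Gibbs' inequality the mean of `log (αⁿ e^{-α} √(2πα) / n!)` is a subgradient of `log T(·, α)`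
at `ν`. By Stirling's formula it is `-α E[y²] / 2 + o(1)`, which tends to `-1 / (2ν)`. So
`ℓ' = -1 / (2ν)`, and `ℓ(1) = 0` because Poisson probabilities sum to `1`; thus `ℓ = -(log ν) / 2`.
-/

open Filter Asymptotics Topology InformationTheory

theorem ringChoose_two_right (ν : ℝ) : Ring.choose ν 2 = ν * (ν - 1) / 2 := by
  simp only [Ring.choose_eq_smul, Nat.factorial_two, Nat.cast_ofNat, descPochhammer_succ_right,
    descPochhammer_zero, CharP.cast_eq_zero, sub_zero, one_mul, Nat.cast_one,
    Polynomial.smeval_mul, Polynomial.smeval_X, pow_one, Polynomial.smeval_sub,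
    Polynomial.smeval_one, pow_zero, one_smul, smul_eq_mul]
  ring

theorem abs_sum_range_mul_pow_le (c : ℕ → ℝ) (N : ℕ) {s y : ℝ} (hs : 0 < s) (hs1 : s ≤ 1)
    (hsy : s ≤ |y|) :
    |∑ j ∈ Finset.range N, c j * y ^ j|
      ≤ (∑ j ∈ Finset.range N, |c j|) * (s⁻¹ * |y|) ^ N := by
  have hone : 1 ≤ s⁻¹ * |y| := by rwa [← div_eq_inv_mul, one_le_div hs]
  rw [Finset.sum_mul]
  refine (Finset.abs_sum_le_sum_abs _ _).trans (Finset.sum_le_sum fun j hj => ?_)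
  rw [abs_mul, abs_pow]
  gcongr
  calc |y| ^ j ≤ (s⁻¹ * |y|) ^ j := by
        gcongr
        exact le_mul_of_one_le_left (abs_nonneg y) ((one_le_inv₀ hs).2 hs1)
    _ ≤ (s⁻¹ * |y|) ^ N := pow_le_pow_right₀ hone (Finset.mem_range.1 hj).le

theorem exists_abs_one_add_rpow_sub_binomial_le (ν : ℝ) (N : ℕ) :
    ∃ K, ∀ y : ℝ, -1 ≤ y →
      |(1 + y) ^ ν - ∑ j ∈ Finset.range N, Ring.choose ν j * y ^ j|
        ≤ K * (|y| ^ N * (1 + (1 + y) ^ ν)) := by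
  have hO := (Real.one_add_rpow_hasFPowerSeriesAt_zero (a := ν)).isBigO_sub_partialSum_pow N
  simp only [zero_add, FormalMultilinearSeries.partialSum, binomialSeries,
    FormalMultilinearSeries.ofScalars_apply_eq, smul_eq_mul] at hO
  obtain ⟨K₀, hK₀, hbound⟩ := hO.exists_pos
  obtain ⟨r, hr, hnear⟩ := Metric.eventually_nhds_iff.1 hbound.bound
  set s := min r 1
  have hs : 0 < s := lt_min hr one_pos
  set c := ∑ j ∈ Finset.range N, |Ring.choose ν j|
  have hc : 0 ≤ c := Finset.sum_nonneg fun _ _ => abs_nonneg _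
  refine ⟨K₀ + (1 + c) * s⁻¹ ^ N, fun y hy => ?_⟩
  have hpow : 0 ≤ (1 + y) ^ ν := Real.rpow_nonneg (by linarith) ν
  rcases lt_or_ge |y| s with hy_near | hy_far
  · have h := hnear (y := y) (by simpa using hy_near.trans_le (min_le_left r 1))
    simp only [Real.norm_eq_abs, abs_pow, abs_abs] at h
    calc _ ≤ K₀ * (|y| ^ N * 1) := by rwa [mul_one]
      _ ≤ _ := by
        gcongr
        · exact le_add_of_nonneg_right (by positivity)
        · exact le_add_of_nonneg_right hpow
  · set q := (s⁻¹ * |y|) ^ N with hq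
    have hq_one : 1 ≤ q := one_le_pow₀ (by rwa [← div_eq_inv_mul, one_le_div hs])
    calc _ ≤ (1 + y) ^ ν + c * q := by
          refine (abs_sub _ _).trans (add_le_add (abs_of_nonneg hpow).le ?_)
          exact abs_sum_range_mul_pow_le _ N hs (min_le_right r 1) hy_far
      _ ≤ (1 + c) * q * (1 + (1 + y) ^ ν) := by
        nlinarith [mul_nonneg hpow (sub_nonneg.2 hq_one), mul_nonneg (mul_nonneg hc hpow)
          (zero_le_one.trans hq_one)]
      _ = (1 + c) * s⁻¹ ^ N * (|y| ^ N * (1 + (1 + y) ^ ν)) := by rw [hq, mul_pow]; ring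
      _ ≤ _ := by
        gcongr
        exact le_add_of_nonneg_left hK₀.le

-- The factor `y + 2` compensates the slow growth of `(1 + y) ^ ν - 1` at infinity when `ν < 1`.
theorem min_mul_sq_le_rpow_sub_one_mul {ν y : ℝ} (hν : 0 < ν) (hy : -1 ≤ y) :
    min ν 1 * y ^ 2 ≤ ((1 + y) ^ ν - 1) * (y * (y + 2)) := by
  rcases le_or_gt 0 y with h | h
  · have hpow : ν * (y / (1 + y)) ≤ (1 + y) ^ ν - 1 := by
      have hlog := Real.one_sub_inv_le_log_of_pos (x := 1 + y) (by linarith)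
      have hfrac : y / (1 + y) = 1 - (1 + y)⁻¹ := by field_simp; ring
      rw [Real.rpow_def_of_pos (by linarith), hfrac]
      nlinarith [Real.add_one_le_exp (Real.log (1 + y) * ν)]
    calc min ν 1 * y ^ 2 ≤ ν * y ^ 2 := by gcongr; exact min_le_left _ _
      _ ≤ ν * y ^ 2 + ν * y ^ 2 / (1 + y) := le_add_of_nonneg_right (by positivity)
      _ = ν * (y / (1 + y)) * (y * (y + 2)) := by field_simp; ring
      _ ≤ ((1 + y) ^ ν - 1) * (y * (y + 2)) := by gcongr
  · have hmin : 0 < min ν 1 := lt_min hν one_pos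
    have hpow : (1 + y) ^ ν ≤ 1 + min ν 1 * y :=
      (Real.rpow_le_rpow_of_exponent_ge' (by linarith) (by linarith) hmin.le
        (min_le_left ν 1)).trans
        (rpow_one_add_le_one_add_mul_self hy hmin.le (min_le_right ν 1))
    calc min ν 1 * y ^ 2 ≤ min ν 1 * y * (y * (y + 2)) := by
          nlinarith [mul_nonneg hmin.le (mul_nonneg (sq_nonneg y) (by linarith : 0 ≤ y + 1))]
      _ ≤ ((1 + y) ^ ν - 1) * (y * (y + 2)) :=
        mul_le_mul_of_nonpos_right (by linarith) (by nlinarith)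

theorem norm_sub_le_mul_inv_of_norm_deriv_le {f f' : ℝ → ℝ} {C a b : ℝ} (hC : 0 ≤ C) (ha : 0 < a)
    (hab : a ≤ b) (hf : ∀ x ∈ Set.Icc a b, HasDerivAt f (f' x) x)
    (hf' : ∀ x ∈ Set.Ico a b, ‖f' x‖ ≤ C * x⁻¹ ^ 2) : ‖f b - f a‖ ≤ C * a⁻¹ := by
  have hd : ∀ x ∈ Set.Icc a b, HasDerivAt (fun x => f x - f a) (f' x) x :=
    fun x hx => (hf x hx).sub_const _
  have hB : ∀ x ∈ Set.Icc a b,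
      HasDerivAt (fun x => C * a⁻¹ - C * x⁻¹) (C * x⁻¹ ^ 2) x := fun x hx => by
    simpa using ((hasDerivAt_inv (ha.trans_le hx.1).ne').const_mul C).const_sub (C * a⁻¹)
  have hle : ‖f b - f a‖ ≤ C * a⁻¹ - C * b⁻¹ :=
    image_norm_le_of_norm_deriv_right_le_deriv_boundary'
      (fun x hx => (hd x hx).continuousAt.continuousWithinAt)
      (fun x hx => (hd x (Set.Ico_subset_Icc_self hx)).hasDerivWithinAt) (by simp)
      (fun x hx => (hB x hx).continuousAt.continuousWithinAt)
      (fun x hx => (hB x (Set.Ico_subset_Icc_self hx)).hasDerivWithinAt) hf'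
      (Set.right_mem_Icc.2 hab)
  exact hle.trans (sub_le_self _ (mul_nonneg hC (inv_nonneg.2 (ha.le.trans hab))))

theorem exists_isBigO_sub_inv_of_hasDerivAt {f f' : ℝ → ℝ}
    (hf : ∀ᶠ x in atTop, HasDerivAt f (f' x) x) (hf' : f' =O[atTop] fun x => x⁻¹ ^ 2) :
    ∃ ℓ, (fun x => f x - ℓ) =O[atTop] fun x => x⁻¹ := by
  obtain ⟨C, hC, hbound⟩ := hf'.exists_pos
  obtain ⟨A, hA⟩ := eventually_atTop.1 ((hf.and hbound.bound).and (eventually_gt_atTop 0))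
  have hincr : ∀ a ≥ A, ∀ b ≥ a, ‖f b - f a‖ ≤ C * a⁻¹ := fun a ha b hab =>
    norm_sub_le_mul_inv_of_norm_deriv_le hC.le (hA a ha).2 hab
      (fun x hx => (hA x (ha.trans hx.1)).1.1)
      (fun x hx => by simpa using (hA x (ha.trans hx.1)).1.2)
  have hcauchy : CauchySeq f := by
    refine Metric.cauchySeq_iff'.2 fun ε hε => ?_
    have hsmall : ∀ᶠ a in atTop, C * a⁻¹ < ε :=
      (tendsto_inv_atTop_zero.const_mul C).eventually_lt_const (by simpa using hε)
    obtain ⟨a, ha_small, ha⟩ := (hsmall.and (eventually_ge_atTop A)).exists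
    exact ⟨a, fun b hab => (dist_eq_norm (f b) (f a)).trans_lt
      ((hincr a ha b hab).trans_lt ha_small)⟩
  obtain ⟨ℓ, hℓ⟩ := cauchySeq_tendsto_of_complete hcauchy
  refine ⟨ℓ, IsBigO.of_bound C ?_⟩
  filter_upwards [eventually_ge_atTop A] with a ha
  have := le_of_tendsto (hℓ.sub_const (f a)).norm ((eventually_ge_atTop a).mono (hincr a ha))
  rwa [Real.norm_of_nonneg (inv_pos.2 (hA a ha).2).le, norm_sub_rev]

theorem abs_le_add_inv_mul_sq {ε : ℝ} (hε : 0 < ε) (y : ℝ) : |y| ≤ ε + ε⁻¹ * y ^ 2 := by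
  have hsq : ε + ε⁻¹ * y ^ 2 - |y| = ε⁻¹ * ((|y| - ε / 2) ^ 2 + 3 / 4 * ε ^ 2) := by
    field_simp
    rw [← sq_abs y]
    ring
  have : 0 ≤ ε⁻¹ * ((|y| - ε / 2) ^ 2 + 3 / 4 * ε ^ 2) := by positivity
  linarith

theorem hasDerivAt_of_forall_mul_sub_le {f g : ℝ → ℝ} {s : Set ℝ} (hs : IsOpen s)
    (hg : ContinuousOn g s)
    (hsub : ∀ x ∈ s, ∀ y ∈ s, g x * (y - x) ≤ f y - f x) {x : ℝ} (hx : x ∈ s) :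
    HasDerivAt f (g x) x := by
  have hg_lim : Tendsto (fun y => g y - g x) (𝓝 x) (𝓝 0) := by
    simpa using (hg.continuousAt (hs.mem_nhds hx)).tendsto.sub_const (g x)
  have hsmall : (fun y => (g y - g x) * (y - x)) =o[𝓝 x] fun y => y - x := by
    simpa only [one_mul] using
      ((isLittleO_one_iff ℝ).2 hg_lim).mul_isBigO (isBigO_refl (fun y => y - x) (𝓝 x))
  refine hasDerivAt_iff_isLittleO.2 ((IsBigO.of_bound 1 ?_).trans_isLittleO hsmall)
  filter_upwards [hs.mem_nhds hx] with y hy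
  have hlower := hsub x hx y hy
  have hupper := hsub y hy x hx
  rw [smul_eq_mul, one_mul, Real.norm_of_nonneg (by linarith)]
  exact .trans (by linarith) (le_abs_self _)

theorem abs_log_one_add_sub_le {y : ℝ} (hy : |y| ≤ 1 / 2) :
    |Real.log (1 + y) - (y - y ^ 2 / 2)| ≤ 2 * |y| ^ 3 := by
  have htaylor := Real.abs_log_sub_add_sum_range_le (x := -y) (by rw [abs_neg]; linarith) 2
  have hsum : ∑ i ∈ Finset.range 2, (-y) ^ (i + 1) / (i + 1) + Real.log (1 - -y) =
      Real.log (1 + y) - (y - y ^ 2 / 2) := by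
    rw [Finset.sum_range_succ, Finset.sum_range_one, sub_neg_eq_add]
    push_cast
    ring
  rw [hsum, abs_neg] at htaylor
  calc _ ≤ |y| ^ 3 / (1 - |y|) := htaylor
    _ ≤ |y| ^ 3 / (1 / 2) := by gcongr; linarith
    _ = 2 * |y| ^ 3 := by ring

theorem abs_klFun_one_add_sub_le {y : ℝ} (hy : -1 ≤ y) :
    |klFun (1 + y) - y ^ 2 / 2| ≤ 4 * |y| ^ 3 := by
  rcases le_or_gt |y| (1 / 2) with hnear | hfar
  · have hsplit : klFun (1 + y) - y ^ 2 / 2 =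
        (1 + y) * (Real.log (1 + y) - (y - y ^ 2 / 2)) - y ^ 3 / 2 := by
      rw [klFun_apply]
      ring
    have hfactor : |1 + y| ≤ 3 / 2 := by
      rw [abs_of_nonneg (by linarith)]
      linarith [le_abs_self y]
    calc |klFun (1 + y) - y ^ 2 / 2|
        ≤ |1 + y| * |Real.log (1 + y) - (y - y ^ 2 / 2)| + |y| ^ 3 / 2 := by
          rw [hsplit]
          refine (abs_sub _ _).trans (add_le_add (abs_mul _ _).le ?_)
          rw [abs_div, abs_pow, abs_two]
      _ ≤ 3 / 2 * (2 * |y| ^ 3) + |y| ^ 3 / 2 := by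
          gcongr
          exact abs_log_one_add_sub_le hnear
      _ ≤ 4 * |y| ^ 3 := by linarith [pow_nonneg (abs_nonneg y) 3]
  · have hupper : klFun (1 + y) ≤ y ^ 2 := by
      rw [klFun_apply]
      rcases hy.eq_or_lt with rfl | hy
      · norm_num
      · nlinarith [Real.log_le_sub_one_of_pos (by linarith : 0 < 1 + y)]
    have hlower : 0 ≤ klFun (1 + y) := klFun_nonneg (by linarith)
    have hcube : y ^ 2 / 2 ≤ |y| ^ 3 := by
      rw [← sq_abs]
      nlinarith [mul_nonneg (sq_nonneg |y|) (sub_nonneg.2 hfar.le)]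
    exact abs_le.2 ⟨by linarith, by linarith⟩

theorem abs_log_le_of_pos {x : ℝ} (hx : 0 < x) : |Real.log x| ≤ |x - 1| * (1 + x⁻¹) := by
  have hupper := Real.log_le_sub_one_of_pos hx
  have hlower := Real.one_sub_inv_le_log_of_pos hx
  have hinv : 1 - x⁻¹ = (x - 1) * x⁻¹ := by field_simp
  have hinv_pos : 0 < x⁻¹ := inv_pos.2 hx
  rw [mul_add, mul_one]
  have hprod : |(x - 1) * x⁻¹| = |x - 1| * x⁻¹ := by rw [abs_mul, abs_of_pos hinv_pos]
  refine abs_le.2 ⟨?_, ?_⟩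
  · linarith [neg_abs_le ((x - 1) * x⁻¹), abs_nonneg (x - 1)]
  · linarith [le_abs_self (x - 1), mul_nonneg (abs_nonneg (x - 1)) hinv_pos.le]

theorem log_stirlingSeq_le {n : ℕ} (hn : n ≠ 0) :
    Real.log (Stirling.stirlingSeq n) ≤ Real.log √Real.pi + (12 * n : ℝ)⁻¹ := by
  have hmono : Monotone fun k : ℕ =>
      Real.log (Stirling.stirlingSeq (k + 1)) - (12 * (k + 1 : ℕ) : ℝ)⁻¹ := by
    refine monotone_nat_of_le_succ fun k => ?_
    have hstep := Stirling.log_stirlingSeq_sdiff_le (k + 1)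
    have htelescope : (1 : ℝ) / (12 * (k + 1 : ℕ) * ((k + 1 : ℕ) + 1)) =
        (12 * (k + 1 : ℕ) : ℝ)⁻¹ - (12 * (k + 1 + 1 : ℕ) : ℝ)⁻¹ := by
      push_cast
      field_simp
      ring
    linarith
  have hlog : Tendsto (fun k => Real.log (Stirling.stirlingSeq (k + 1))) atTop
      (𝓝 (Real.log √Real.pi)) :=
    (Stirling.tendsto_stirlingSeq_sqrt_pi.log (by positivity)).comp (tendsto_add_atTop_nat 1)
  have hinv : Tendsto (fun k : ℕ => (12 * (k + 1 : ℕ) : ℝ)⁻¹) atTop (𝓝 0) :=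
    tendsto_inv_atTop_zero.comp ((tendsto_natCast_atTop_atTop.comp
      (tendsto_add_atTop_nat 1)).const_mul_atTop (by norm_num))
  obtain ⟨m, rfl⟩ := Nat.exists_eq_succ_of_ne_zero hn
  have := hmono.ge_of_tendsto (by simpa using hlog.sub hinv) m
  linarith

namespace ConwayMaxwellPoisson

section Moments

variable {ν α : ℝ}

/-- The unnormalised Conway–Maxwell–Poisson weight `(αⁿ / n!) ^ ν`. -/
noncomputable def weight (ν α : ℝ) (n : ℕ) : ℝ := (α ^ n / n.factorial) ^ ν

/-- The partition function, i.e. the normalising constant, of the Conway–Maxwell–Poisson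
distribution. -/
noncomputable def partitionFunction (ν α : ℝ) : ℝ := ∑' n, weight ν α n

/-- The probability mass function of the Conway–Maxwell–Poisson distribution. -/
noncomputable def prob (ν α : ℝ) (n : ℕ) : ℝ := weight ν α n / partitionFunction ν α

/-- The relative deviation `n / α - 1` of a value `n` from the mode. -/
noncomputable def deviation (α : ℝ) (n : ℕ) : ℝ := n / α - 1

/-- The `k`-th moment of the relative deviation under the Conway–Maxwell–Poisson distribution. -/
noncomputable def moment (ν α : ℝ) (k : ℕ) : ℝ := ∑' n, prob ν α n * deviation α n ^ k

/-- The `k`-th moment of the relative deviation of `n + 1`, which is `deviation α n + α⁻¹`,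
expanded in the moments of `deviation α n`. -/
noncomputable def shiftedMoment (ν α : ℝ) (k : ℕ) : ℝ :=
  ∑ j ∈ Finset.range (k + 1), moment ν α j * α⁻¹ ^ (k - j) * k.choose j

theorem weight_pos (hα : 0 < α) (n : ℕ) : 0 < weight ν α n :=
  Real.rpow_pos_of_pos (by positivity) ν

theorem tendsto_weight_atTop (hν : 0 < ν) (α : ℝ) : Tendsto (weight ν α) atTop (𝓝 0) := by
  simpa only [Real.zero_rpow hν.ne'] using!
    (FloorSemiring.tendsto_pow_div_factorial_atTop α).rpow_const (p := ν) (Or.inr hν.le)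

theorem weight_mul_left {c : ℝ} (hc : 0 ≤ c) (hα : 0 ≤ α) (n : ℕ) :
    weight ν (c * α) n = (c ^ ν) ^ n * weight ν α n := by
  rw [weight, weight, mul_pow, mul_div_assoc, Real.mul_rpow (by positivity) (by positivity),
    Real.rpow_pow_comm hc]

theorem summable_weight_mul_pow (hν : 0 < ν) (hα : 0 < α) (k : ℕ) :
    Summable fun n : ℕ => weight ν α n * (n : ℝ) ^ k := by
  set c : ℝ := 2⁻¹ ^ ν⁻¹
  have hc : 0 < c := by positivity
  have hgeom : Summable fun n : ℕ => (n : ℝ) ^ k * 2⁻¹ ^ n :=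
    summable_pow_mul_geometric_of_norm_lt_one k (by norm_num)
  have hbig := (tendsto_weight_atTop hν (c⁻¹ * α)).isBigO_one ℝ |>.mul
    (isBigO_refl (fun n : ℕ => (n : ℝ) ^ k * 2⁻¹ ^ n) atTop)
  simp only [one_mul] at hbig
  refine (summable_of_isBigO_nat hgeom hbig).congr fun n => ?_
  have hscale := weight_mul_left (ν := ν) hc.le (by positivity : 0 ≤ c⁻¹ * α) n
  rw [mul_inv_cancel_left₀ hc.ne', Real.rpow_inv_rpow (by norm_num) hν.ne'] at hscale
  rw [hscale]
  ring

theorem summable_weight (hν : 0 < ν) (hα : 0 < α) : Summable (weight ν α) := by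
  simpa using summable_weight_mul_pow hν hα 0

theorem partitionFunction_pos (hν : 0 < ν) (hα : 0 < α) : 0 < partitionFunction ν α :=
  (summable_weight hν hα).tsum_pos (fun n => (weight_pos hα n).le) 0 (weight_pos hα 0)

theorem prob_nonneg (hν : 0 < ν) (hα : 0 < α) (n : ℕ) : 0 ≤ prob ν α n :=
  div_nonneg (weight_pos hα n).le (partitionFunction_pos hν hα).le

theorem neg_one_le_deviation (hα : 0 < α) (n : ℕ) : -1 ≤ deviation α n := by
  have : 0 ≤ n / α := by positivity
  rw [deviation]
  linarith

theorem hasSum_prob_mul_deviation_pow (hν : 0 < ν) (hα : 0 < α) (k : ℕ) :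
    HasSum (fun n => prob ν α n * deviation α n ^ k) (moment ν α k) := by
  refine Summable.hasSum ?_
  simp_rw [prob, deviation, sub_eq_add_neg, add_pow, Finset.mul_sum]
  refine summable_sum fun j _ => ((summable_weight_mul_pow hν hα j).mul_left
    ((partitionFunction ν α)⁻¹ * α⁻¹ ^ j * (-1) ^ (k - j) * k.choose j)).congr fun n => ?_
  rw [div_pow]
  ring

theorem moment_zero (hν : 0 < ν) (hα : 0 < α) : moment ν α 0 = 1 := by
  simp_rw [moment, pow_zero, mul_one, prob, tsum_div_const]
  exact div_self (partitionFunction_pos hν hα).ne'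

theorem moment_nonneg_of_even (hν : 0 < ν) (hα : 0 < α) {k : ℕ} (hk : Even k) :
    0 ≤ moment ν α k :=
  tsum_nonneg fun n => mul_nonneg (prob_nonneg hν hα n) (hk.pow_nonneg _)

theorem hasSum_prob_mul_succ_deviation_pow (hν : 0 < ν) (hα : 0 < α) (k : ℕ) :
    HasSum (fun n => prob ν α n * deviation α (n + 1) ^ k) (shiftedMoment ν α k) := by
  have hshift (n : ℕ) : deviation α (n + 1) = deviation α n + α⁻¹ := by
    simp only [deviation, Nat.cast_add, Nat.cast_one]
    ring
  simp_rw [hshift, add_pow, Finset.mul_sum]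
  refine hasSum_sum fun j _ => ?_
  simpa only [mul_assoc] using (hasSum_prob_mul_deviation_pow hν hα j).mul_right
    (α⁻¹ ^ (k - j) * k.choose j)

theorem prob_succ (hα : 0 < α) (n : ℕ) :
    prob ν α (n + 1) * ((n + 1 : ℕ) / α) ^ ν = prob ν α n := by
  rw [prob, prob, div_mul_eq_mul_div, weight, weight, ← Real.mul_rpow (by positivity)
    (by positivity), pow_succ, Nat.factorial_succ]
  congr 2
  push_cast
  field_simp

-- Stein's identity: tilting by `(1 + deviation α n) ^ ν = (n / α) ^ ν` shifts the distribution.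
theorem hasSum_prob_mul_rpow_mul_deviation_pow (hν : 0 < ν) (hα : 0 < α) (k : ℕ) :
    HasSum (fun n => prob ν α n * ((1 + deviation α n) ^ ν * deviation α n ^ k))
      (shiftedMoment ν α k) := by
  have hzero : prob ν α 0 * ((1 + deviation α 0) ^ ν * deviation α 0 ^ k) = 0 := by
    simp [deviation, Real.zero_rpow hν.ne']
  have hsucc (n : ℕ) : prob ν α (n + 1) * ((1 + deviation α (n + 1)) ^ ν *
      deviation α (n + 1) ^ k) = prob ν α n * deviation α (n + 1) ^ k := by
    rw [← prob_succ hα n, deviation, add_sub_cancel, mul_assoc]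
  rw [← hasSum_nat_add_iff' 1, Finset.sum_range_one, hzero, sub_zero]
  simpa only [hsucc] using hasSum_prob_mul_succ_deviation_pow hν hα k

theorem min_mul_moment_le (hν : 0 < ν) (hα : 0 < α) (k : ℕ) :
    min ν 1 * moment ν α (2 * k + 2) ≤
      (shiftedMoment ν α (2 * k + 2) - moment ν α (2 * k + 2)) +
        2 * (shiftedMoment ν α (2 * k + 1) - moment ν α (2 * k + 1)) := by
  have hdiff (j : ℕ) := (hasSum_prob_mul_rpow_mul_deviation_pow hν hα j).sub
    (hasSum_prob_mul_deviation_pow hν hα j)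
  refine hasSum_le (fun n => ?_) ((hasSum_prob_mul_deviation_pow hν hα _).mul_left _)
    ((hdiff _).add ((hdiff _).mul_left 2))
  set y := deviation α n
  have hy := min_mul_sq_le_rpow_sub_one_mul hν (neg_one_le_deviation hα n)
  calc min ν 1 * (prob ν α n * y ^ (2 * k + 2))
      = prob ν α n * (y ^ k) ^ 2 * (min ν 1 * y ^ 2) := by ring
    _ ≤ prob ν α n * (y ^ k) ^ 2 * (((1 + y) ^ ν - 1) * (y * (y + 2))) := by
        gcongr
        exact mul_nonneg (prob_nonneg hν hα n) (sq_nonneg _)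
    _ = _ := by ring

theorem abs_moment_odd_le (hν : 0 < ν) (hα : 0 < α) (k : ℕ) {ε : ℝ} (hε : 0 < ε) :
    |moment ν α (2 * k + 1)| ≤ ε * moment ν α (2 * k) + ε⁻¹ * moment ν α (2 * k + 2) := by
  have hsum (j : ℕ) := hasSum_prob_mul_deviation_pow hν hα j
  refine (hsum _).norm_le_of_bounded (((hsum _).mul_left ε).add ((hsum _).mul_left ε⁻¹))
    fun n => ?_
  set y := deviation α n
  have hodd : |y ^ (2 * k + 1)| = (y ^ k) ^ 2 * |y| := by
    rw [pow_succ, abs_mul, abs_of_nonneg ((even_two_mul k).pow_nonneg y), pow_mul']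
  calc ‖prob ν α n * y ^ (2 * k + 1)‖ = prob ν α n * ((y ^ k) ^ 2 * |y|) := by
        rw [norm_mul, Real.norm_of_nonneg (prob_nonneg hν hα n), Real.norm_eq_abs, hodd]
    _ ≤ prob ν α n * ((y ^ k) ^ 2 * (ε + ε⁻¹ * y ^ 2)) := by
        gcongr
        · exact prob_nonneg hν hα n
        · exact abs_le_add_inv_mul_sq hε y
    _ = _ := by ring

end Moments

section MomentAsymptotics

variable {ν : ℝ}

theorem inv_sqrt_sq_eventuallyEq : (fun α : ℝ => (√α)⁻¹ ^ 2) =ᶠ[atTop] fun α => α⁻¹ := by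
  filter_upwards [eventually_ge_atTop 0] with α hα
  rw [inv_pow, Real.sq_sqrt hα]

theorem inv_sqrt_pow_isBigO {m n : ℕ} (hmn : m ≤ n) :
    (fun α : ℝ => (√α)⁻¹ ^ n) =O[atTop] fun α => (√α)⁻¹ ^ m := by
  refine IsBigO.of_bound 1 ?_
  filter_upwards [eventually_ge_atTop 1] with α hα
  rw [one_mul, Real.norm_of_nonneg (by positivity), Real.norm_of_nonneg (by positivity)]
  exact pow_le_pow_of_le_one (by positivity) (inv_le_one_of_one_le₀ (Real.one_le_sqrt.2 hα)) hmn

theorem inv_pow_isBigO_inv_sqrt_pow (k : ℕ) :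
    (fun α : ℝ => α⁻¹ ^ k) =O[atTop] fun α => (√α)⁻¹ ^ (2 * k) := by
  simpa only [pow_mul] using (inv_sqrt_sq_eventuallyEq.symm.isBigO).pow k

theorem inv_sqrt_pow_four_isBigO :
    (fun α : ℝ => (√α)⁻¹ ^ 4) =O[atTop] fun α => α⁻¹ ^ 2 := by
  simpa only [← pow_mul] using (inv_sqrt_sq_eventuallyEq.isBigO).pow 2

theorem sum_moment_isBigO {i k : ℕ} (hik : i ≤ k)
    (hmoment : ∀ j < i, (moment ν · j) =O[atTop] fun α => (√α)⁻¹ ^ j) :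
    (fun α => ∑ j ∈ Finset.range i, moment ν α j * α⁻¹ ^ (k - j) * k.choose j)
      =O[atTop] fun α => (√α)⁻¹ ^ (k + 1) := by
  refine IsBigO.fun_sum fun j hj => ?_
  have hji := Finset.mem_range.1 hj
  have hmul := ((hmoment j hji).mul (inv_pow_isBigO_inv_sqrt_pow (k - j))).mul
    (isBigO_const_const (k.choose j : ℝ) one_ne_zero atTop)
  simp only [mul_one, ← pow_add] at hmul
  exact hmul.trans (inv_sqrt_pow_isBigO (by omega))

theorem shiftedMoment_sub_moment (ν α : ℝ) (k : ℕ) : shiftedMoment ν α k - moment ν α k =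
    ∑ j ∈ Finset.range k, moment ν α j * α⁻¹ ^ (k - j) * k.choose j := by
  simp [shiftedMoment, Finset.sum_range_succ]

theorem moment_even_succ_le {α : ℝ} (hν : 0 < ν) (hα : 0 < α) (k : ℕ)
    (hlarge : (2 * k + 2) * α⁻¹ ≤ min ν 1 / 2) :
    min ν 1 / 2 * moment ν α (2 * k + 2) ≤
      ∑ j ∈ Finset.range (2 * k + 1), moment ν α j * α⁻¹ ^ (2 * k + 2 - j) * (2 * k + 2).choose j +
      2 * ∑ j ∈ Finset.range (2 * k + 1),
        moment ν α j * α⁻¹ ^ (2 * k + 1 - j) * (2 * k + 1).choose j +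
      (2 * k + 2) * (α⁻¹ * moment ν α (2 * k)) := by
  have hnonneg : 0 ≤ moment ν α (2 * k + 2) :=
    moment_nonneg_of_even hν hα (even_two_mul (k + 1))
  have hmin := min_mul_moment_le hν hα k
  rw [shiftedMoment_sub_moment, shiftedMoment_sub_moment, Finset.sum_range_succ,
    show 2 * k + 2 - (2 * k + 1) = 1 by omega, pow_one, Nat.choose_succ_self_right] at hmin
  push_cast at hmin
  have hodd : moment ν α (2 * k + 1) ≤ moment ν α (2 * k) + moment ν α (2 * k + 2) := by
    simpa using (le_abs_self _).trans (abs_moment_odd_le hν hα k one_pos)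
  have hodd_mul := mul_le_mul_of_nonneg_left hodd (by positivity : 0 ≤ (2 * k + 2) * α⁻¹)
  have hlarge_mul := mul_le_mul_of_nonneg_right hlarge hnonneg
  linarith

theorem moment_even_succ_isBigO (hν : 0 < ν) {k : ℕ}
    (hmoment : ∀ j < 2 * k + 1, (moment ν · j) =O[atTop] fun α => (√α)⁻¹ ^ j) :
    (moment ν · (2 * k + 2)) =O[atTop] fun α => (√α)⁻¹ ^ (2 * k + 2) := by
  have hhigh := (sum_moment_isBigO (by omega : 2 * k + 1 ≤ 2 * k + 2) hmoment).trans
    (inv_sqrt_pow_isBigO (by omega : 2 * k + 2 ≤ 2 * k + 2 + 1))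
  have hlow := sum_moment_isBigO le_rfl hmoment
  have hdiag : (fun α => α⁻¹ * moment ν α (2 * k)) =O[atTop] fun α => (√α)⁻¹ ^ (2 * k + 2) := by
    have hmul := (inv_pow_isBigO_inv_sqrt_pow 1).mul (hmoment (2 * k) (by omega))
    simpa only [← pow_add, pow_one, mul_one, add_comm 2] using hmul
  refine .trans ?_ ((hhigh.add (hlow.const_mul_left 2)).add
    (hdiag.const_mul_left (2 * k + 2 : ℝ)))
  have hc : 0 < min ν 1 / 2 := half_pos (lt_min hν one_pos)
  have hlarge : ∀ᶠ α : ℝ in atTop, (2 * k + 2) * α⁻¹ ≤ min ν 1 / 2 :=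
    (tendsto_inv_atTop_zero.const_mul (2 * k + 2 : ℝ)).eventually_le_const (by simpa using hc)
  refine IsBigO.of_bound (min ν 1 / 2)⁻¹ ?_
  filter_upwards [hlarge, eventually_gt_atTop 0] with α hα_large hα
  have hnonneg : 0 ≤ moment ν α (2 * k + 2) :=
    moment_nonneg_of_even hν hα (even_two_mul (k + 1))
  rw [Real.norm_of_nonneg hnonneg, ← div_eq_inv_mul, le_div_iff₀' hc]
  exact (moment_even_succ_le hν hα k hα_large).trans (le_abs_self _)

theorem moment_odd_isBigO (hν : 0 < ν) {k : ℕ}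
    (heven : (moment ν · (2 * k)) =O[atTop] fun α => (√α)⁻¹ ^ (2 * k))
    (heven_succ : (moment ν · (2 * k + 2)) =O[atTop] fun α => (√α)⁻¹ ^ (2 * k + 2)) :
    (moment ν · (2 * k + 1)) =O[atTop] fun α => (√α)⁻¹ ^ (2 * k + 1) := by
  have hlow := (isBigO_refl (fun α : ℝ => (√α)⁻¹) atTop).mul heven
  have hhigh := (isBigO_refl (fun α : ℝ => (√α)⁻¹⁻¹) atTop).mul heven_succ
  have hcancel : (fun α : ℝ => (√α)⁻¹⁻¹ * (√α)⁻¹ ^ (2 * k + 2)) =ᶠ[atTop]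
      fun α => (√α)⁻¹ ^ (2 * k + 1) := by
    filter_upwards [eventually_gt_atTop 0] with α hα
    rw [pow_succ', inv_mul_cancel_left₀ (by positivity)]
  simp only [← pow_succ'] at hlow
  refine .trans (IsBigO.of_bound 1 ?_) (hlow.add (hhigh.trans_eventuallyEq hcancel))
  filter_upwards [eventually_gt_atTop 0] with α hα
  rw [one_mul]
  exact (abs_moment_odd_le hν hα k (by positivity)).trans (le_abs_self _)

theorem moment_isBigO (hν : 0 < ν) (k : ℕ) :
    (moment ν · k) =O[atTop] fun α => (√α)⁻¹ ^ k := by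
  have hpairs (n : ℕ) : ∀ j < 2 * n + 1, (moment ν · j) =O[atTop] fun α => (√α)⁻¹ ^ j := by
    induction n with
    | zero =>
      intro j hj
      obtain rfl : j = 0 := by omega
      refine EventuallyEq.isBigO ?_
      filter_upwards [eventually_gt_atTop 0] with α hα
      rw [moment_zero hν hα, pow_zero]
    | succ n ih =>
      intro j hj
      have heven := moment_even_succ_isBigO hν ih
      obtain h | rfl | rfl : j < 2 * n + 1 ∨ j = 2 * n + 1 ∨ j = 2 * n + 2 := by omega
      · exact ih j h
      · exact moment_odd_isBigO hν (ih _ (by omega)) heven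
      · exact heven
  exact hpairs k k (by omega)

theorem shiftedMoment_isBigO (hν : 0 < ν) (k : ℕ) :
    (shiftedMoment ν · k) =O[atTop] fun α => (√α)⁻¹ ^ k := by
  have hsub := (sum_moment_isBigO le_rfl fun j (_ : j < k) => moment_isBigO hν j).trans
    (inv_sqrt_pow_isBigO k.le_succ)
  simp only [← shiftedMoment_sub_moment] at hsub
  simpa using hsub.add (moment_isBigO hν k)

theorem abs_shiftedMoment_sub_sum_le (hν : 0 < ν) {N k : ℕ} (hNk : Even (N + k)) :
    ∃ K, ∀ α > 0, |shiftedMoment ν α k - ∑ j ∈ Finset.range N,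
      Ring.choose ν j * moment ν α (j + k)| ≤
        K * (moment ν α (N + k) + shiftedMoment ν α (N + k)) := by
  obtain ⟨K, hK⟩ := exists_abs_one_add_rpow_sub_binomial_le ν N
  refine ⟨K, fun α hα => ?_⟩
  have hstein (j : ℕ) := hasSum_prob_mul_rpow_mul_deviation_pow hν hα j
  have hsum (j : ℕ) := hasSum_prob_mul_deviation_pow hν hα j
  refine ((hstein k).sub (hasSum_sum fun j (_ : j ∈ Finset.range N) =>
    (hsum (j + k)).mul_left (Ring.choose ν j))).norm_le_of_bounded
    (((hsum _).add (hstein _)).mul_left K) fun n => ?_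
  set y := deviation α n
  have hterm : prob ν α n * ((1 + y) ^ ν * y ^ k) - ∑ j ∈ Finset.range N,
      Ring.choose ν j * (prob ν α n * y ^ (j + k)) = prob ν α n * y ^ k *
        ((1 + y) ^ ν - ∑ j ∈ Finset.range N, Ring.choose ν j * y ^ j) := by
    rw [mul_sub, Finset.mul_sum]
    congr 1
    · ring
    · exact Finset.sum_congr rfl fun j _ => by ring
  have heven : |y| ^ N * |y| ^ k = y ^ (N + k) := by rw [← pow_add, hNk.pow_abs]
  have hprob := prob_nonneg hν hα n
  rw [hterm, Real.norm_eq_abs, abs_mul, abs_mul, abs_pow, abs_of_nonneg hprob]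
  calc _ ≤ prob ν α n * |y| ^ k * (K * (|y| ^ N * (1 + (1 + y) ^ ν))) := by
        gcongr
        exact hK y (neg_one_le_deviation hα n)
    _ = K * (prob ν α n * (|y| ^ N * |y| ^ k) * (1 + (1 + y) ^ ν)) := by ring
    _ = _ := by rw [heven]; ring

theorem shiftedMoment_sub_sum_isBigO (hν : 0 < ν) {N k : ℕ} (hNk : Even (N + k)) :
    (fun α => shiftedMoment ν α k - ∑ j ∈ Finset.range N,
      Ring.choose ν j * moment ν α (j + k)) =O[atTop] fun α => (√α)⁻¹ ^ (N + k) := by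
  obtain ⟨K, hK⟩ := abs_shiftedMoment_sub_sum_le hν hNk
  refine .trans (IsBigO.of_bound 1 ?_) (((moment_isBigO hν (N + k)).add
    (shiftedMoment_isBigO hν (N + k))).const_mul_left K)
  filter_upwards [eventually_gt_atTop 0] with α hα
  rw [one_mul]
  exact (hK α hα).trans (le_abs_self _)

theorem shiftedMoment_zero {α : ℝ} (hν : 0 < ν) (hα : 0 < α) : shiftedMoment ν α 0 = 1 := by
  simp [shiftedMoment, moment_zero hν hα]

theorem shiftedMoment_one {α : ℝ} (hν : 0 < ν) (hα : 0 < α) :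
    shiftedMoment ν α 1 = α⁻¹ + moment ν α 1 := by
  simp [shiftedMoment, Finset.sum_range_succ, moment_zero hν hα]

theorem shiftedMoment_two {α : ℝ} (hν : 0 < ν) (hα : 0 < α) :
    shiftedMoment ν α 2 = α⁻¹ ^ 2 + 2 * (α⁻¹ * moment ν α 1) + moment ν α 2 := by
  simp only [shiftedMoment, Nat.reduceAdd, Finset.sum_range_succ, Finset.sum_range_zero, zero_add,
    moment_zero hν hα, tsub_zero, one_mul, Nat.choose_zero_right, Nat.cast_one, mul_one,
    Nat.add_one_sub_one, pow_one, Nat.choose_succ_self_right, Nat.cast_ofNat, tsub_self, pow_zero,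
    Nat.choose_self]
  ring

theorem moment_one_isBigO (hν : 0 < ν) : (moment ν · 1) =O[atTop] fun α => α⁻¹ := by
  refine .trans (IsBigO.congr' ((shiftedMoment_sub_sum_isBigO hν (N := 2) (k := 0)
    even_two).const_mul_left (-ν⁻¹)) ?_ .rfl) (inv_sqrt_sq_eventuallyEq.isBigO)
  filter_upwards [eventually_gt_atTop 0] with α hα
  simp only [shiftedMoment_zero hν hα, moment_zero hν hα, Finset.sum_range_succ,
    Finset.sum_range_zero, Ring.choose_zero_right, Ring.choose_one_right, zero_add, add_zero]
  field_simp
  ring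

theorem moment_three_isBigO (hν : 0 < ν) : (moment ν · 3) =O[atTop] fun α => α⁻¹ ^ 2 := by
  have hstein := (shiftedMoment_sub_sum_isBigO hν (N := 2) (k := 2) (by decide)).trans
    inv_sqrt_pow_four_isBigO
  have hcross : (fun α => α⁻¹ * moment ν α 1) =O[atTop] fun α => α⁻¹ ^ 2 := by
    simpa only [pow_two] using (isBigO_refl (fun α : ℝ => α⁻¹) atTop).mul (moment_one_isBigO hν)
  refine (((((isBigO_refl (fun α : ℝ => α⁻¹ ^ 2) atTop).add (hcross.const_mul_left 2)).sub
    hstein)).const_mul_left ν⁻¹).congr' ?_ .rfl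
  filter_upwards [eventually_gt_atTop 0] with α hα
  simp only [shiftedMoment_two hν hα, Finset.sum_range_succ,
    Finset.sum_range_zero, Ring.choose_zero_right, Ring.choose_one_right, zero_add, Nat.reduceAdd]
  field_simp
  ring

theorem inv_sub_mul_moment_two_isBigO (hν : 0 < ν) :
    (fun α => α⁻¹ - ν * moment ν α 2) =O[atTop] fun α => α⁻¹ ^ 2 := by
  have hstein := (shiftedMoment_sub_sum_isBigO hν (N := 3) (k := 1) (by decide)).trans
    inv_sqrt_pow_four_isBigO
  refine (hstein.add ((moment_three_isBigO hν).const_mul_left (Ring.choose ν 2))).congr' ?_ .rfl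
  filter_upwards [eventually_gt_atTop 0] with α hα
  simp only [shiftedMoment_one hν hα, Finset.sum_range_succ,
    Finset.sum_range_zero, Ring.choose_zero_right, Ring.choose_one_right, zero_add, Nat.reduceAdd]
  ring

theorem mul_moment_one_add_isBigO (hν : 0 < ν) :
    (fun α => ν * moment ν α 1 + (ν - 1) / 2 * α⁻¹) =O[atTop] fun α => α⁻¹ ^ 2 := by
  have hstein := (shiftedMoment_sub_sum_isBigO hν (N := 4) (k := 0) (by decide)).trans
    inv_sqrt_pow_four_isBigO
  refine ((((inv_sub_mul_moment_two_isBigO hν).const_mul_left ((ν - 1) / 2)).sub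
    ((moment_three_isBigO hν).const_mul_left (Ring.choose ν 3))).sub hstein).congr' ?_ .rfl
  filter_upwards [eventually_gt_atTop 0] with α hα
  simp only [shiftedMoment_zero hν hα, moment_zero hν hα, Finset.sum_range_succ,
    Finset.sum_range_zero, Ring.choose_zero_right, Ring.choose_one_right, ringChoose_two_right,
    zero_add, Nat.reduceAdd]
  ring

end MomentAsymptotics

section PartitionFunction

variable {ν : ℝ}

theorem hasDerivAt_weight {α : ℝ} (ν : ℝ) (hα : 0 < α) (n : ℕ) :
    HasDerivAt (weight ν · n) (ν * (n / α) * weight ν α n) α := by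
  have hbase : HasDerivAt (fun x : ℝ => x ^ n / n.factorial)
      (n * α ^ (n - 1) / n.factorial) α := (hasDerivAt_pow n α).div_const _
  refine (hbase.rpow_const (p := ν) (Or.inl (by positivity))).congr_deriv ?_
  rw [weight, Real.rpow_sub_one (by positivity)]
  rcases n with _ | n
  · simp
  · rw [Nat.add_sub_cancel, pow_succ]
    field_simp

theorem weight_le_weight {α β : ℝ} (hν : 0 ≤ ν) (hα : 0 ≤ α) (hαβ : α ≤ β) (n : ℕ) :
    weight ν α n ≤ weight ν β n := by
  unfold weight
  gcongr

theorem hasDerivAt_partitionFunction {α : ℝ} (hν : 0 < ν) (hα : 0 < α) :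
    HasDerivAt (partitionFunction ν) (ν * (1 + moment ν α 1) * partitionFunction ν α) α := by
  have hderiv : HasDerivAt (partitionFunction ν) (∑' n, ν * (n / α) * weight ν α n) α := by
    refine hasDerivAt_tsum_of_isPreconnected (t := Set.Ioo (α / 2) (2 * α))
      (u := fun n => ν * (n / (α / 2)) * weight ν (2 * α) n) ?_ isOpen_Ioo isPreconnected_Ioo
      (fun n y hy => hasDerivAt_weight ν ((half_pos hα).trans hy.1) n) (fun n y hy => ?_)
      (y₀ := α) ?_ (summable_weight hν hα) ?_
    · refine ((summable_weight_mul_pow hν (by positivity : 0 < 2 * α) 1).mul_left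
        (ν / (α / 2))).congr fun n => by ring
    · have hy0 : 0 < y := (half_pos hα).trans hy.1
      have hw := weight_le_weight hν.le hy0.le hy.2.le n
      have hw0 := weight_pos (ν := ν) hy0 n
      rw [Real.norm_of_nonneg (by positivity)]
      gcongr
      exact hy.1.le
    all_goals exact ⟨by linarith, by linarith⟩
  convert hderiv using 1
  have hsum := ((hasSum_prob_mul_deviation_pow hν hα 0).add
    (hasSum_prob_mul_deviation_pow hν hα 1)).mul_left (ν * partitionFunction ν α)
  rw [moment_zero hν hα] at hsum
  rw [mul_right_comm, ← hsum.tsum_eq]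
  refine tsum_congr fun n => ?_
  have hZ := (partitionFunction_pos hν hα).ne'
  rw [prob, deviation]
  field_simp
  ring

end PartitionFunction

section StirlingExpectation

variable {ν α : ℝ}

/-- The Poisson probability `e^{-α} αⁿ / n!` rescaled by `√(2πα)`, so that it tends to `1` at the
mode; in the paper's notation `f_α(n) = scaledPoisson α n ^ (ν - 1)`. -/
noncomputable def scaledPoisson (α : ℝ) (n : ℕ) : ℝ :=
  α ^ n * Real.exp (-α) * √(2 * Real.pi * α) / n.factorial

/-- The Poisson expectation `E[f_α(X_α)]`. -/
noncomputable def stirlingExpectation (ν α : ℝ) : ℝ :=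
  ∑' n : ℕ, Real.exp (-α) * (α ^ n / n.factorial) * scaledPoisson α n ^ (ν - 1)

theorem scaledPoisson_pos (hα : 0 < α) (n : ℕ) : 0 < scaledPoisson α n := by
  unfold scaledPoisson
  positivity

theorem scaledPoisson_rpow (ν : ℝ) (hα : 0 < α) (n : ℕ) :
    scaledPoisson α n ^ ν = (Real.exp (-α) * √(2 * Real.pi * α)) ^ ν * weight ν α n := by
  rw [weight, ← Real.mul_rpow (by positivity) (by positivity), scaledPoisson]
  ring_nf

theorem hasSum_scaledPoisson_rpow (hν : 0 < ν) (hα : 0 < α) :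
    HasSum (fun n => scaledPoisson α n ^ ν) (√(2 * Real.pi * α) * stirlingExpectation ν α) := by
  have hterm (n : ℕ) : √(2 * Real.pi * α) * (Real.exp (-α) * (α ^ n / n.factorial) *
      scaledPoisson α n ^ (ν - 1)) = scaledPoisson α n ^ ν := by
    rw [Real.rpow_sub_one (scaledPoisson_pos hα n).ne']
    have := (scaledPoisson_pos hα n).ne'
    rw [mul_div_assoc', mul_div_assoc', div_eq_iff this]
    rw [scaledPoisson]
    ring
  rw [stirlingExpectation, ← tsum_mul_left]
  simp_rw [hterm]
  refine Summable.hasSum (((summable_weight hν hα).mul_left _).congr fun n =>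
    (scaledPoisson_rpow ν hα n).symm)

theorem sqrt_mul_stirlingExpectation (hν : 0 < ν) (hα : 0 < α) :
    √(2 * Real.pi * α) * stirlingExpectation ν α =
      (Real.exp (-α) * √(2 * Real.pi * α)) ^ ν * partitionFunction ν α := by
  rw [← (hasSum_scaledPoisson_rpow hν hα).tsum_eq, partitionFunction, ← tsum_mul_left]
  exact tsum_congr (scaledPoisson_rpow ν hα)

theorem stirlingExpectation_pos (hν : 0 < ν) (hα : 0 < α) : 0 < stirlingExpectation ν α := by
  refine pos_of_mul_pos_right ?_ (Real.sqrt_nonneg (2 * Real.pi * α))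
  rw [sqrt_mul_stirlingExpectation hν hα]
  have := partitionFunction_pos hν hα
  positivity

theorem stirlingExpectation_one (hα : 0 ≤ α) : stirlingExpectation 1 α = 1 := by
  lift α to NNReal using hα
  simpa [stirlingExpectation, mul_div_assoc] using
    (ProbabilityTheory.hasSum_one_poissonMeasure α).tsum_eq

theorem scaledPoisson_rpow_eq_prob_mul (hν : 0 < ν) (hα : 0 < α) (n : ℕ) :
    scaledPoisson α n ^ ν =
      prob ν α n * (√(2 * Real.pi * α) * stirlingExpectation ν α) := by
  have hZ := (partitionFunction_pos hν hα).ne'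
  rw [sqrt_mul_stirlingExpectation hν hα, scaledPoisson_rpow ν hα, prob]
  field_simp

theorem log_stirlingExpectation (hν : 0 < ν) (hα : 0 < α) :
    Real.log (stirlingExpectation ν α) = Real.log (partitionFunction ν α) - ν * α +
      (ν - 1) / 2 * (Real.log (2 * Real.pi) + Real.log α) := by
  have hZ := partitionFunction_pos hν hα
  have hT := stirlingExpectation_pos hν hα
  have h := congrArg Real.log (sqrt_mul_stirlingExpectation hν hα)
  rw [Real.log_mul (by positivity) hT.ne', Real.log_mul (by positivity) hZ.ne',
    Real.log_rpow (by positivity), Real.log_mul (by positivity) (by positivity), Real.log_exp,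
    Real.log_sqrt (by positivity), Real.log_mul (by positivity) hα.ne'] at h
  linarith

theorem hasDerivAt_log_stirlingExpectation (hν : 0 < ν) (hα : 0 < α) :
    HasDerivAt (fun α => Real.log (stirlingExpectation ν α))
      (ν * moment ν α 1 + (ν - 1) / 2 * α⁻¹) α := by
  have hlogZ := (hasDerivAt_partitionFunction hν hα).log (partitionFunction_pos hν hα).ne'
  have hcongr := (eventually_gt_nhds hα).mono fun x hx => log_stirlingExpectation (ν := ν) hν hx
  refine (((hlogZ.sub ((hasDerivAt_id α).const_mul ν)).add
    (((Real.hasDerivAt_log hα.ne').const_add _).const_mul ((ν - 1) / 2))).congr_of_eventuallyEq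
    hcongr).congr_deriv ?_
  rw [mul_div_cancel_right₀ _ (partitionFunction_pos hν hα).ne']
  ring

theorem exists_log_stirlingExpectation_sub_isBigO (hν : 0 < ν) :
    ∃ ℓ, (fun α => Real.log (stirlingExpectation ν α) - ℓ) =O[atTop] fun α => α⁻¹ :=
  exists_isBigO_sub_inv_of_hasDerivAt
    ((eventually_gt_atTop 0).mono fun _ hα => hasDerivAt_log_stirlingExpectation hν hα)
    (mul_moment_one_add_isBigO hν)

theorem log_scaledPoisson (hα : 0 < α) {n : ℕ} (hn : n ≠ 0) :
    Real.log (scaledPoisson α n) = -α * klFun (n / α) - Real.log (n / α) / 2 -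
      (Real.log (Stirling.stirlingSeq n) - Real.log √Real.pi) := by
  have hn0 : (0 : ℝ) < n := by positivity
  rw [scaledPoisson, Real.log_div (by positivity) (by positivity),
    Real.log_mul (by positivity) (by positivity), Real.log_mul (by positivity) (by positivity),
    Real.log_exp, Real.log_pow, Real.log_sqrt (by positivity), Real.log_mul (by positivity) hα.ne',
    Real.log_mul two_ne_zero Real.pi_ne_zero, klFun_apply, Stirling.log_stirlingSeq_formula,
    Real.log_div hn0.ne' hα.ne', Real.log_div hn0.ne' (Real.exp_ne_zero 1), Real.log_exp,
    Real.log_sqrt Real.pi_pos.le, Real.log_mul two_ne_zero hn0.ne']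
  field_simp
  ring

theorem abs_log_scaledPoisson_zero_add_le (hα : 0 < α) :
    |Real.log (scaledPoisson α 0) + α / 2| ≤ 8 * α + α⁻¹ := by
  have hlog : Real.log (scaledPoisson α 0) = -α + Real.log (2 * Real.pi * α) / 2 := by
    rw [scaledPoisson, pow_zero, one_mul, Nat.factorial_zero, Nat.cast_one, div_one,
      Real.log_mul (by positivity) (by positivity), Real.log_exp, Real.log_sqrt (by positivity)]
  have hupper := Real.log_le_sub_one_of_pos (by positivity : 0 < 2 * Real.pi * α)
  have hlower := Real.one_sub_inv_le_log_of_pos (by positivity : 0 < 2 * Real.pi * α)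
  have hinv : (2 * Real.pi * α)⁻¹ ≤ α⁻¹ := by
    gcongr
    exact le_mul_of_one_le_left hα.le (by linarith [Real.pi_gt_three])
  have hpi : Real.pi * α ≤ 4 * α := by gcongr; exact Real.pi_le_four
  have : 0 < α⁻¹ := by positivity
  rw [hlog]
  exact abs_le.2 ⟨by linarith, by linarith⟩

theorem half_le_abs_deviation (hα : 0 < α) {n : ℕ} (hn : 2 * n ≤ α) :
    1 / 2 ≤ |deviation α n| := by
  have hdiv : n / α ≤ 1 / 2 := by
    rw [div_le_div_iff₀ hα two_pos]
    linarith
  rw [deviation, abs_sub_comm]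
  exact .trans (by linarith) (le_abs_self _)

theorem abs_log_natCast_div_le (hα : 0 < α) {n : ℕ} (hn : n ≠ 0) :
    |Real.log (n / α)| ≤ 4 * α * |deviation α n| ^ 3 + 3 * |deviation α n| := by
  have hn1 : (1 : ℝ) ≤ n := by exact_mod_cast Nat.one_le_iff_ne_zero.2 hn
  have hlog : |Real.log (n / α)| ≤ |deviation α n| * (1 + α / n) := by
    simpa only [inv_div, deviation] using abs_log_le_of_pos (by positivity : 0 < n / α)
  refine hlog.trans ?_
  rcases le_or_gt α (2 * n) with hnear | hfar
  · have hratio : α / n ≤ 2 := (div_le_iff₀ (by positivity)).2 hnear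
    have hcube : 0 ≤ 4 * α * |deviation α n| ^ 3 := by positivity
    nlinarith [mul_le_mul_of_nonneg_left hratio (abs_nonneg (deviation α n))]
  · have hratio : α / n ≤ α := div_le_self hα.le hn1
    have hsq : 1 ≤ 4 * |deviation α n| ^ 2 := by
      nlinarith [half_le_abs_deviation hα hfar.le]
    calc |deviation α n| * (1 + α / n)
        ≤ |deviation α n| * (1 + α * (4 * |deviation α n| ^ 2)) := by
          gcongr
          exact hratio.trans (le_mul_of_one_le_right hα.le hsq)
      _ ≤ 4 * α * |deviation α n| ^ 3 + 3 * |deviation α n| := by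
          linarith [abs_nonneg (deviation α n)]

theorem abs_log_stirlingSeq_sub_le (hα : 0 < α) {n : ℕ} (hn : n ≠ 0) :
    |Real.log (Stirling.stirlingSeq n) - Real.log √Real.pi| ≤ |deviation α n| + α⁻¹ := by
  have hlower : Real.log √Real.pi ≤ Real.log (Stirling.stirlingSeq n) :=
    Real.log_le_log (by positivity) (Stirling.sqrt_pi_le_stirlingSeq hn)
  rw [abs_of_nonneg (by linarith)]
  refine (sub_le_iff_le_add'.2 (log_stirlingSeq_le hn)).trans ?_
  rcases le_or_gt α (2 * n) with hnear | hfar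
  · have hinv : (12 * n : ℝ)⁻¹ ≤ α⁻¹ := by
      gcongr
      linarith [n.cast_nonneg (α := ℝ)]
    linarith [abs_nonneg (deviation α n)]
  · have hn1 : (1 : ℝ) ≤ n := by exact_mod_cast Nat.one_le_iff_ne_zero.2 hn
    have hinv : (12 * n : ℝ)⁻¹ ≤ 2⁻¹ := by
      gcongr
      linarith
    linarith [half_le_abs_deviation hα hfar.le, inv_pos.2 hα]

-- Where `n` is far below the mode the Taylor expansion fails, but there the cubic term dominates.
theorem abs_log_scaledPoisson_add_le (hα : 0 < α) (n : ℕ) :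
    |Real.log (scaledPoisson α n) + α * deviation α n ^ 2 / 2| ≤
      8 * α * |deviation α n| ^ 3 + 3 * |deviation α n| + α⁻¹ := by
  rcases eq_or_ne n 0 with rfl | hn
  · have hzero : deviation α 0 = -1 := by simp [deviation]
    rw [hzero, neg_one_sq, mul_one, abs_neg, abs_one, one_pow, mul_one, mul_one]
    linarith [abs_log_scaledPoisson_zero_add_le hα]
  set y := deviation α n with hy
  have hdiv : n / α = 1 + y := by rw [hy, deviation]; ring
  have hkl := mul_le_mul_of_nonneg_left
    (abs_klFun_one_add_sub_le (neg_one_le_deviation hα n)) hα.le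
  have hlog := abs_log_natCast_div_le hα hn
  have hstirling := abs_log_stirlingSeq_sub_le hα hn
  rw [← abs_of_pos hα, ← abs_mul, abs_of_pos hα] at hkl
  have hsplit : Real.log (scaledPoisson α n) + α * y ^ 2 / 2 =
      -(α * (klFun (1 + y) - y ^ 2 / 2)) - Real.log (n / α) / 2 -
        (Real.log (Stirling.stirlingSeq n) - Real.log √Real.pi) := by
    rw [log_scaledPoisson hα hn, hdiv]
    ring
  rw [hsplit]
  have hcube : 0 ≤ α * |y| ^ 3 := by positivity
  rw [abs_le] at hkl hlog hstirling ⊢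
  exact ⟨by linarith [abs_nonneg y], by linarith [abs_nonneg y]⟩

end StirlingExpectation

section GibbsInequality

variable {ν μ α : ℝ}

/-- The mean of `log (scaledPoisson α)` under the Conway–Maxwell–Poisson distribution, which is a
subgradient of `log (stirlingExpectation · α)` at `ν`. -/
noncomputable def meanLog (ν α : ℝ) : ℝ := ∑' n, prob ν α n * Real.log (scaledPoisson α n)

theorem abs_log_scaledPoisson_add_le_quartic (hα : 0 < α) (n : ℕ) :
    |Real.log (scaledPoisson α n) + α * deviation α n ^ 2 / 2| ≤
      3 * (√α)⁻¹ + α⁻¹ + 11 * √α * deviation α n ^ 2 + 8 * √α ^ 3 * deviation α n ^ 4 := by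
  refine (abs_log_scaledPoisson_add_le hα n).trans ?_
  set y := deviation α n
  have hlinear : |y| ≤ (√α)⁻¹ + √α * y ^ 2 := by
    simpa only [inv_inv] using abs_le_add_inv_mul_sq (by positivity : 0 < (√α)⁻¹) y
  have hcubic : α * |y| ^ 3 ≤ √α * y ^ 2 + √α ^ 3 * y ^ 4 :=
    calc α * |y| ^ 3 = √α ^ 2 * y ^ 2 * |y| := by
          rw [Real.sq_sqrt hα.le, ← sq_abs y]
          ring
      _ ≤ √α ^ 2 * y ^ 2 * ((√α)⁻¹ + √α * y ^ 2) := by gcongr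
      _ = √α * y ^ 2 + √α ^ 3 * y ^ 4 := by field_simp
  linarith

theorem hasSum_prob_mul_quartic (hν : 0 < ν) (hα : 0 < α) (a b c : ℝ) :
    HasSum (fun n => prob ν α n * (a + b * deviation α n ^ 2 + c * deviation α n ^ 4))
      (a + b * moment ν α 2 + c * moment ν α 4) := by
  have hsum (k : ℕ) := hasSum_prob_mul_deviation_pow hν hα k
  convert! (((hsum 0).mul_left a).add ((hsum 2).mul_left b)).add ((hsum 4).mul_left c) using 1
  · ext n
    ring
  · rw [moment_zero hν hα, mul_one]

theorem norm_prob_mul_log_add_le (hν : 0 < ν) (hα : 0 < α) (n : ℕ) :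
    ‖prob ν α n * Real.log (scaledPoisson α n) +
        α / 2 * (prob ν α n * deviation α n ^ 2)‖ ≤
      prob ν α n * (3 * (√α)⁻¹ + α⁻¹ + 11 * √α * deviation α n ^ 2 +
        8 * √α ^ 3 * deviation α n ^ 4) := by
  have hprob := prob_nonneg hν hα n
  calc _ = ‖prob ν α n * (Real.log (scaledPoisson α n) + α * deviation α n ^ 2 / 2)‖ := by ring_nf
    _ = prob ν α n * |Real.log (scaledPoisson α n) + α * deviation α n ^ 2 / 2| := by
        rw [norm_mul, Real.norm_of_nonneg hprob, Real.norm_eq_abs]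
    _ ≤ _ := by
        gcongr
        exact abs_log_scaledPoisson_add_le_quartic hα n

theorem hasSum_prob_mul_log (hν : 0 < ν) (hα : 0 < α) :
    HasSum (fun n => prob ν α n * Real.log (scaledPoisson α n)) (meanLog ν α) := by
  have hsummable := Summable.of_norm_bounded (hasSum_prob_mul_quartic hν hα _ _ _).summable
    (norm_prob_mul_log_add_le hν hα)
  refine Summable.hasSum ?_
  simpa only [add_sub_cancel_right] using hsummable.sub
    ((hasSum_prob_mul_deviation_pow hν hα 2).mul_left (α / 2)).summable

theorem abs_meanLog_add_le (hν : 0 < ν) (hα : 0 < α) :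
    |meanLog ν α + α / 2 * moment ν α 2| ≤
      3 * (√α)⁻¹ + α⁻¹ + 11 * √α * moment ν α 2 + 8 * √α ^ 3 * moment ν α 4 :=
  ((hasSum_prob_mul_log hν hα).add
    ((hasSum_prob_mul_deviation_pow hν hα 2).mul_left (α / 2))).norm_le_of_bounded
    (hasSum_prob_mul_quartic hν hα _ _ _) (norm_prob_mul_log_add_le hν hα)

theorem sqrt_pow_mul_moment_isBigO (hν : 0 < ν) (k : ℕ) :
    (fun α => √α ^ k * moment ν α (k + 1)) =O[atTop] fun α => (√α)⁻¹ := by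
  refine ((isBigO_refl (fun α : ℝ => √α ^ k) atTop).mul (moment_isBigO hν (k + 1))).trans
    (EventuallyEq.isBigO ?_)
  filter_upwards [eventually_gt_atTop 0] with α hα
  rw [pow_succ, ← mul_assoc, ← mul_pow, mul_inv_cancel₀ (by positivity), one_pow, one_mul]

theorem tendsto_mul_moment_two (hν : 0 < ν) :
    Tendsto (fun α => α * moment ν α 2) atTop (𝓝 ν⁻¹) := by
  have hO : (fun α => α * moment ν α 2 - ν⁻¹) =O[atTop] fun α => α⁻¹ := by
    refine (((isBigO_refl (fun α : ℝ => α) atTop).mul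
      (inv_sub_mul_moment_two_isBigO hν)).const_mul_left (-ν⁻¹)).congr' ?_ ?_
    all_goals
      filter_upwards [eventually_gt_atTop 0] with α hα
      field_simp
    ring
  exact tendsto_sub_nhds_zero_iff.1 (hO.trans_tendsto tendsto_inv_atTop_zero)

theorem tendsto_meanLog (hν : 0 < ν) :
    Tendsto (meanLog ν) atTop (𝓝 (-(ν⁻¹ / 2))) := by
  have hinv_sqrt : Tendsto (fun α : ℝ => (√α)⁻¹) atTop (𝓝 0) :=
    tendsto_inv_atTop_zero.comp Real.tendsto_sqrt_atTop
  have hbound : Tendsto (fun α => 3 * (√α)⁻¹ + α⁻¹ + 11 * √α * moment ν α 2 +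
      8 * √α ^ 3 * moment ν α 4) atTop (𝓝 0) := by
    have hsecond := (sqrt_pow_mul_moment_isBigO hν 1).trans_tendsto hinv_sqrt
    have hfourth := (sqrt_pow_mul_moment_isBigO hν 3).trans_tendsto hinv_sqrt
    simpa [mul_assoc] using (((hinv_sqrt.const_mul 3).add tendsto_inv_atTop_zero).add
      (hsecond.const_mul 11)).add (hfourth.const_mul 8)
  have hzero : Tendsto (fun α => meanLog ν α + α / 2 * moment ν α 2) atTop (𝓝 0) :=
    squeeze_zero_norm' ((eventually_gt_atTop 0).mono fun α hα =>
      abs_meanLog_add_le hν hα) hbound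
  simpa [div_mul_eq_mul_div] using hzero.sub ((tendsto_mul_moment_two hν).div_const 2)

theorem prob_mul_affine_log_le_scaledPoisson_rpow (hν : 0 < ν) (hα : 0 < α) (μ m : ℝ) (n : ℕ) :
    √(2 * Real.pi * α) * stirlingExpectation ν α * Real.exp m *
      (prob ν α n * ((μ - ν) * Real.log (scaledPoisson α n) - m + 1)) ≤
        scaledPoisson α n ^ μ := by
  set x := (μ - ν) * Real.log (scaledPoisson α n) with hx
  have hpos := scaledPoisson_pos hα n
  calc _ = scaledPoisson α n ^ ν * Real.exp m * (x - m + 1) := by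
        rw [scaledPoisson_rpow_eq_prob_mul hν hα]
        ring
    _ ≤ scaledPoisson α n ^ ν * Real.exp m * Real.exp (x - m) := by
        gcongr
        exact Real.add_one_le_exp _
    _ = scaledPoisson α n ^ μ := by
        rw [mul_assoc, ← Real.exp_add, add_sub_cancel, hx, mul_comm (μ - ν), Real.exp_mul,
          Real.exp_log hpos, ← Real.rpow_add hpos, add_sub_cancel]

theorem mul_meanLog_le_log_sub (hν : 0 < ν) (hμ : 0 < μ) (hα : 0 < α) :
    (μ - ν) * meanLog ν α ≤
      Real.log (stirlingExpectation μ α) - Real.log (stirlingExpectation ν α) := by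
  set m := (μ - ν) * meanLog ν α with hm
  have hT := stirlingExpectation_pos hν hα
  have hmean : HasSum (fun n => prob ν α n * ((μ - ν) * Real.log (scaledPoisson α n) - m + 1))
      1 := by
    convert! ((hasSum_prob_mul_log hν hα).mul_left (μ - ν)).add
      ((hasSum_prob_mul_deviation_pow hν hα 0).mul_right (1 - m)) using 1
    · ext n
      ring
    · rw [moment_zero hν hα, ← hm]
      ring
  have hle := hasSum_le (prob_mul_affine_log_le_scaledPoisson_rpow hν hα μ m)
    (hmean.mul_left _) (hasSum_scaledPoisson_rpow hμ hα)
  rw [mul_one, mul_assoc] at hle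
  rw [le_sub_iff_add_le', ← Real.log_exp m, ← Real.log_mul hT.ne' (Real.exp_ne_zero m)]
  gcongr
  exact le_of_mul_le_mul_left hle (by positivity)

end GibbsInequality

section Limit

theorem eqOn_neg_log_div_two_of_forall_mul_sub_le {ℓ : ℝ → ℝ}
    (hsub : ∀ ν ∈ Set.Ioi 0, ∀ μ ∈ Set.Ioi 0, -(ν⁻¹ / 2) * (μ - ν) ≤ ℓ μ - ℓ ν)
    (hone : ℓ 1 = 0) : Set.EqOn ℓ (fun ν => -(Real.log ν / 2)) (Set.Ioi 0) := by
  have hderiv (ν : ℝ) (hν : ν ∈ Set.Ioi 0) : HasDerivAt ℓ (-(ν⁻¹ / 2)) ν :=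
    hasDerivAt_of_forall_mul_sub_le (g := fun ν => -(ν⁻¹ / 2)) isOpen_Ioi
      ((continuousOn_inv₀.mono fun x hx => ne_of_gt hx).div_const 2).neg hsub hν
  have hderiv_log (ν : ℝ) (hν : ν ∈ Set.Ioi 0) :
      HasDerivAt (fun ν => -(Real.log ν / 2)) (-(ν⁻¹ / 2)) ν :=
    ((Real.hasDerivAt_log (ne_of_gt hν)).div_const 2).neg
  exact isOpen_Ioi.eqOn_of_deriv_eq isPreconnected_Ioi
    (fun ν hν => (hderiv ν hν).differentiableAt.differentiableWithinAt)
    (fun ν hν => (hderiv_log ν hν).differentiableAt.differentiableWithinAt)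
    (fun ν hν => (hderiv ν hν).deriv.trans (hderiv_log ν hν).deriv.symm)
    (Set.mem_Ioi.2 one_pos) (by simpa using hone)

theorem log_stirlingExpectation_add_isBigO {ν : ℝ} (hν : 0 < ν) :
    (fun α => Real.log (stirlingExpectation ν α) + Real.log ν / 2) =O[atTop] fun α => α⁻¹ := by
  choose! ℓ hℓ using fun ν (hν : 0 < ν) => exists_log_stirlingExpectation_sub_isBigO hν
  have hlim (ν : ℝ) (hν : 0 < ν) :
      Tendsto (fun α => Real.log (stirlingExpectation ν α)) atTop (𝓝 (ℓ ν)) :=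
    tendsto_sub_nhds_zero_iff.1 ((hℓ ν hν).trans_tendsto tendsto_inv_atTop_zero)
  have hsub (ν : ℝ) (hν : 0 < ν) (μ : ℝ) (hμ : 0 < μ) : -(ν⁻¹ / 2) * (μ - ν) ≤ ℓ μ - ℓ ν := by
    rw [mul_comm]
    exact le_of_tendsto_of_tendsto ((tendsto_meanLog hν).const_mul _)
      ((hlim μ hμ).sub (hlim ν hν))
      ((eventually_gt_atTop 0).mono fun α hα => mul_meanLog_le_log_sub hν hμ hα)
  have hone : ℓ 1 = 0 := by
    refine tendsto_nhds_unique (hlim 1 one_pos) (tendsto_const_nhds.congr' ?_)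
    filter_upwards [eventually_ge_atTop 0] with α hα
    rw [stirlingExpectation_one hα, Real.log_one]
  simpa only [eqOn_neg_log_div_two_of_forall_mul_sub_le hsub hone hν, sub_neg_eq_add]
    using hℓ ν hν

theorem stirlingExpectation_sub_isBigO {ν : ℝ} (hν : 0 < ν) :
    (fun α => stirlingExpectation ν α - 1 / √ν) =O[atTop] fun α => α⁻¹ := by
  have hlog := log_stirlingExpectation_add_isBigO hν
  have hlim : Tendsto (fun α => Real.log (stirlingExpectation ν α)) atTop
      (𝓝 (-(Real.log ν / 2))) := by
    refine tendsto_sub_nhds_zero_iff.1 ?_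
    simpa only [sub_neg_eq_add] using hlog.trans_tendsto tendsto_inv_atTop_zero
  have hexp := ((Real.hasDerivAt_exp (-(Real.log ν / 2))).isBigO_sub).comp_tendsto hlim
  have hvalue : Real.exp (-(Real.log ν / 2)) = 1 / √ν := by
    rw [Real.exp_neg, ← Real.log_sqrt hν.le, Real.exp_log (by positivity), one_div]
  refine (hexp.trans (by simpa only [Function.comp_def, sub_neg_eq_add] using hlog)).congr' ?_ .rfl
  filter_upwards [eventually_gt_atTop 0] with α hα
  rw [Function.comp_apply, Real.exp_log (stirlingExpectation_pos hν hα), hvalue]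

end Limit

end ConwayMaxwellPoisson

/-- For `ν > 0`, the Poisson expectation
`E[f_α(X_α)] = ∑_{n=0}^∞ e^{-α} (α^n/n!) (α^n e^{-α} √(2πα)/n!)^{ν-1}`
satisfies `E[f_α(X_α)] = ν^{-1/2} + O(α^{-1})` as `α → ∞`. -/
theorem poisson_stirling_expectation_asymptotic (ν : ℝ) (hν : 0 < ν) :
    ∃ C > (0 : ℝ), ∃ A > (0 : ℝ), ∀ α : ℝ, α ≥ A →
      |(∑' n : ℕ, Real.exp (-α) * (α ^ n / (n.factorial : ℝ)) *
          (α ^ n * Real.exp (-α) * Real.sqrt (2 * Real.pi * α) / (n.factorial : ℝ)) ^ (ν - 1)) -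
        1 / Real.sqrt ν|
        ≤ C * α⁻¹ := by
  obtain ⟨C, hC, hbound⟩ :=
    (ConwayMaxwellPoisson.stirlingExpectation_sub_isBigO hν).exists_pos
  obtain ⟨A, hA⟩ := eventually_atTop.1 hbound.bound
  refine ⟨C, hC, max A 1, by positivity, fun α hα => ?_⟩
  have hα0 : 0 < α := one_pos.trans_le ((le_max_right A 1).trans hα)
  have h := hA α ((le_max_left A 1).trans hα)
  rwa [Real.norm_eq_abs, Real.norm_of_nonneg (inv_nonneg.2 hα0.le)] at h
end

section
/- Fix ν > 0. Then as λ → ∞, ln(Z(λ,ν)) = ν·λ^(1/ν) − ((ν−1)/(2ν))·ln(λ) − ln((2π)^((ν−1)/2)·√ν) + ((ν²−1)/(24ν))·λ^(−1/ν) + ((ν²−1)/(48ν²))·λ^(−2/ν) + O(λ^(−3/ν)). Precisely: there exist constants C > 0 and Λ > 0 (depending only on ν) such that for all λ ≥ Λ, |ln(Z(λ,ν)) − ν·λ^(1/ν) + ((ν−1)/(2ν))·ln(λ) + ln((2π)^((ν−1)/2)·√ν) − ((ν²−1)/(24ν))·λ^(−1/ν) − ((ν²−1)/(48ν²))·λ^(−2/ν)|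 ≤ C·λ^(−3/ν). -/
open scoped BigOperators

/-- The Conway-Maxwell-Poisson normalizing constant `Z(λ,ν) = ∑_{i=0}^∞ λ^i/(i!)^ν`. -/
noncomputable def cmpZ (lam nu : ℝ) : ℝ := ∑' i : ℕ, lam ^ i / (i.factorial : ℝ) ^ nu

/-!
Put `x = λ ^ (1 / ν)`, so that `Z = ∑ (x ^ i / i!) ^ ν`, and let `X` have the corresponding CMP
distribution. Then `d/dx log Z = ν E[X / x]`, so the expansion follows, up to its constant term, by
integrating from infinity an expansion of `m 1`, where `m k = E[(X / x - 1) ^ k]`.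

Shifting the index of summation gives `E[(X / x) ^ ν g(X)] = E[g(X + 1)]`. With `g` a power of
`X / x - 1`, a lower bound on `(t ^ ν - 1) (t ^ 2 - 1)` yields `m k = O(x ^ (-⌊k / 2⌋))` by
induction, and expanding `(X / x) ^ ν` in powers of `X / x - 1` yields linear relations between the
`m k` modulo `O(x ^ (-4))`. These relations are triangular in the order of magnitude of the products
`x ^ (-j) m k`, hence determine `m 1`.

For the constant term, `exp (-ν x) Z` is the sum of the `ν`-th powers of the Poisson probabilities
of mean `x`. By Stirling's formula and dominated convergence, its product with `x ^ ((ν - 1) / 2)`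
tends to the integral of the `ν`-th power of the standard Gaussian density.
-/

open Asymptotics Filter Finset MeasureTheory Set
open scoped Topology

section Weights

/-- The CMP weight `(x ^ i / i!) ^ ν`, that is, `λ ^ i / (i!) ^ ν` in the variable
`x = λ ^ (1 / ν)`. Up to the factor `exp (-ν x)` it is the `ν`-th power of the Poisson
probability of `i` with mean `x`. -/
noncomputable def cmpWeight (ν x : ℝ) (i : ℕ) : ℝ :=
  (x ^ i / i.factorial) ^ ν

variable {ν x : ℝ}

theorem cmpWeight_pos (hx : 0 < x) (i : ℕ) : 0 < cmpWeight ν x i := by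
  unfold cmpWeight
  positivity

theorem cmpWeight_eq_div (hx : 0 ≤ x) (i : ℕ) :
    cmpWeight ν x i = (x ^ ν) ^ i / (i.factorial : ℝ) ^ ν := by
  rw [cmpWeight, Real.div_rpow (by positivity) (by positivity), ← Real.rpow_natCast,
    ← Real.rpow_natCast, ← Real.rpow_mul hx, ← Real.rpow_mul hx, mul_comm]

theorem cmpZ_rpow (hx : 0 ≤ x) : cmpZ (x ^ ν) ν = ∑' i, cmpWeight ν x i :=
  tsum_congr fun i ↦ (cmpWeight_eq_div hx i).symm

theorem rpow_mul_cmpWeight_succ (hx : 0 < x) (i : ℕ) :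
    (((i + 1 : ℕ) : ℝ) / x) ^ ν * cmpWeight ν x (i + 1) = cmpWeight ν x i := by
  rw [cmpWeight, cmpWeight, ← Real.mul_rpow (by positivity) (by positivity)]
  congr 1
  rw [Nat.factorial_succ]
  push_cast
  field_simp
  ring

theorem pow_mul_cmpWeight {r : ℝ} (hν : ν ≠ 0) (hr : 0 ≤ r) (hx : 0 ≤ x) (i : ℕ) :
    r ^ i * cmpWeight ν x i = cmpWeight ν (r ^ ν⁻¹ * x) i := by
  rw [cmpWeight_eq_div hx, cmpWeight_eq_div (by positivity), Real.mul_rpow (by positivity) hx,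
    Real.rpow_inv_rpow hr hν, mul_pow, mul_div_assoc]

theorem summable_cmpWeight (hν : 0 < ν) (hx : 0 < x) : Summable (cmpWeight ν x) := by
  refine summable_of_ratio_test_tendsto_lt_one one_pos
    (Eventually.of_forall fun i ↦ (cmpWeight_pos hx i).ne') (l := 0) ?_
  have hratio (i : ℕ) : ‖cmpWeight ν x (i + 1)‖ / ‖cmpWeight ν x i‖ = (x / (i + 1 : ℕ)) ^ ν := by
    rw [Real.norm_of_nonneg (cmpWeight_pos hx _).le, Real.norm_of_nonneg (cmpWeight_pos hx _).le,
      ← rpow_mul_cmpWeight_succ hx i, ← inv_div x,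
      Real.inv_rpow (by positivity)]
    have := (cmpWeight_pos (ν := ν) hx (i + 1)).ne'
    field_simp
  simp only [hratio]
  have hlim : Tendsto (fun i : ℕ ↦ x / (i + 1 : ℕ)) atTop (𝓝 0) :=
    (tendsto_const_div_atTop_nhds_zero_nat x).comp (tendsto_add_atTop_nat 1)
  simpa [Real.zero_rpow hν.ne'] using hlim.rpow_const (Or.inr hν.le)

theorem summable_mul_cmpWeight_of_isBigO {f : ℕ → ℝ} {r : ℝ} (hν : 0 < ν) (hx : 0 < x)
    (hr : 0 < r) (hf : f =O[atTop] fun i : ℕ ↦ r ^ i) :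
    Summable fun i ↦ f i * cmpWeight ν x i := by
  refine summable_of_isBigO_nat (summable_cmpWeight hν (x := r ^ ν⁻¹ * x) (by positivity)) ?_
  rw [← funext (pow_mul_cmpWeight hν.ne' hr.le hx.le)]
  exact hf.mul (isBigO_refl _ _)

theorem isBigO_div_sub_one_pow (x : ℝ) (k : ℕ) :
    (fun i : ℕ ↦ ((i : ℝ) / x - 1) ^ k) =O[atTop] fun i : ℕ ↦ (2 : ℝ) ^ i := by
  have hlin : (fun i : ℕ ↦ (i : ℝ) / x - 1) =O[atTop] fun i : ℕ ↦ (i : ℝ) := by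
    refine IsBigO.sub ?_ ?_
    · simpa only [div_eq_inv_mul] using isBigO_const_mul_self x⁻¹ (fun i : ℕ ↦ (i : ℝ)) atTop
    · exact (isLittleO_const_id_atTop (1 : ℝ)).isBigO.comp_tendsto tendsto_natCast_atTop_atTop
  exact (hlin.pow k).trans (isLittleO_pow_const_const_pow_of_one_lt k one_lt_two).isBigO

theorem summable_div_sub_one_pow_mul_cmpWeight (hν : 0 < ν) (hx : 0 < x) (k : ℕ) :
    Summable fun i : ℕ ↦ ((i : ℝ) / x - 1) ^ k * cmpWeight ν x i :=
  summable_mul_cmpWeight_of_isBigO hν hx two_pos (isBigO_div_sub_one_pow x k)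

theorem tsum_cmpWeight_pos (hν : 0 < ν) (hx : 0 < x) : 0 < ∑' i, cmpWeight ν x i :=
  (summable_cmpWeight hν hx).tsum_pos (fun i ↦ (cmpWeight_pos hx i).le) 0 (cmpWeight_pos hx 0)

end Weights

section Mean

/-- The expectation of `f X`, where `X` is a CMP random variable with parameters `x ^ ν` and `ν`,
so that `X` takes the value `i` with probability proportional to `cmpWeight ν x i`. -/
noncomputable def cmpMean (ν x : ℝ) (f : ℕ → ℝ) : ℝ :=
  (∑' i, f i * cmpWeight ν x i) / ∑' i, cmpWeight ν x i

/-- The `k`-th moment of the relative deviation `X / x - 1` of a CMP random variable `X` with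
parameters `x ^ ν` and `ν`; it is centered at `1` and not at the expectation of `X / x`. -/
noncomputable def cmpMoment (ν x : ℝ) (k : ℕ) : ℝ :=
  cmpMean ν x fun i ↦ ((i : ℝ) / x - 1) ^ k

variable {ν x : ℝ} {f g : ℕ → ℝ}

theorem cmpMean_const_mul (c : ℝ) : cmpMean ν x (fun i ↦ c * f i) = c * cmpMean ν x f := by
  simp only [cmpMean, mul_assoc, tsum_mul_left, mul_div_assoc]

theorem cmpMean_add (hf : Summable fun i ↦ f i * cmpWeight ν x i)
    (hg : Summable fun i ↦ g i * cmpWeight ν x i) :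
    cmpMean ν x (fun i ↦ f i + g i) = cmpMean ν x f + cmpMean ν x g := by
  simp only [cmpMean, add_mul, hf.tsum_add hg, add_div]

theorem cmpMean_sub (hf : Summable fun i ↦ f i * cmpWeight ν x i)
    (hg : Summable fun i ↦ g i * cmpWeight ν x i) :
    cmpMean ν x (fun i ↦ f i - g i) = cmpMean ν x f - cmpMean ν x g := by
  simp only [cmpMean, sub_mul, hf.tsum_sub hg, sub_div]

theorem cmpMean_sum {ι : Type*} {s : Finset ι} {f : ι → ℕ → ℝ}
    (hf : ∀ j ∈ s, Summable fun i ↦ f j i * cmpWeight ν x i) :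
    cmpMean ν x (fun i ↦ ∑ j ∈ s, f j i) = ∑ j ∈ s, cmpMean ν x (f j) := by
  simp only [cmpMean, sum_mul, Summable.tsum_finsetSum hf, sum_div]

theorem abs_cmpMean_le (hν : 0 < ν) (hx : 0 < x) (hfg : ∀ i, |f i| ≤ g i)
    (hg : Summable fun i ↦ g i * cmpWeight ν x i) : |cmpMean ν x f| ≤ cmpMean ν x g := by
  rw [cmpMean, abs_div, abs_of_pos (tsum_cmpWeight_pos hν hx)]
  refine div_le_div_of_nonneg_right ?_ (tsum_cmpWeight_pos hν hx).le
  refine tsum_of_norm_bounded (f := fun i ↦ f i * cmpWeight ν x i) hg.hasSum fun i ↦ ?_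
  rw [norm_mul, Real.norm_of_nonneg (cmpWeight_pos hx i).le]
  exact mul_le_mul_of_nonneg_right (hfg i) (cmpWeight_pos hx i).le

theorem cmpMean_mono (hν : 0 < ν) (hx : 0 < x) (hfg : ∀ i, f i ≤ g i)
    (hf : Summable fun i ↦ f i * cmpWeight ν x i)
    (hg : Summable fun i ↦ g i * cmpWeight ν x i) : cmpMean ν x f ≤ cmpMean ν x g :=
  div_le_div_of_nonneg_right
    (hf.tsum_le_tsum (fun i ↦ mul_le_mul_of_nonneg_right (hfg i) (cmpWeight_pos hx i).le) hg)
    (tsum_cmpWeight_pos hν hx).le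

theorem cmpMoment_zero (hν : 0 < ν) (hx : 0 < x) : cmpMoment ν x 0 = 1 := by
  simpa [cmpMoment, cmpMean] using div_self (tsum_cmpWeight_pos hν hx).ne'

/-- For `ν = 1` this is the Stein equation of the Poisson distribution. -/
theorem hasSum_rpow_mul_cmpWeight_iff {a : ℝ} (hν : ν ≠ 0) (hx : 0 < x) :
    HasSum (fun i : ℕ ↦ ((i : ℝ) / x) ^ ν * g i * cmpWeight ν x i) a ↔
      HasSum (fun i ↦ g (i + 1) * cmpWeight ν x i) a := by
  rw [← hasSum_nat_add_iff' 1]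
  simp only [mul_right_comm _ (g _), rpow_mul_cmpWeight_succ hx, sum_range_one, Nat.cast_zero,
    zero_div, Real.zero_rpow hν, zero_mul, sub_zero, mul_comm (cmpWeight ν x _)]

theorem add_one_div_sub_one_pow (x : ℝ) (k i : ℕ) :
    (((i + 1 : ℕ) : ℝ) / x - 1) ^ k =
      ∑ j ∈ range (k + 1), k.choose j * x⁻¹ ^ (k - j) * ((i : ℝ) / x - 1) ^ j := by
  rw [Nat.cast_succ, add_div, one_div, add_sub_right_comm, add_pow]
  exact sum_congr rfl fun j _ ↦ by ring

theorem summable_rpow_mul_pow_mul_cmpWeight (hν : 0 < ν) (hx : 0 < x) (k : ℕ) :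
    Summable fun i : ℕ ↦ ((i : ℝ) / x) ^ ν * ((i : ℝ) / x - 1) ^ k * cmpWeight ν x i := by
  refine ((hasSum_rpow_mul_cmpWeight_iff hν.ne' hx).2 (Summable.hasSum ?_)).summable
  simp only [add_one_div_sub_one_pow, sum_mul, mul_assoc]
  exact summable_sum fun j _ ↦
    ((summable_div_sub_one_pow_mul_cmpWeight hν hx j).mul_left _).mul_left _

theorem cmpMean_rpow_mul_pow (hν : 0 < ν) (hx : 0 < x) (k : ℕ) :
    cmpMean ν x (fun i ↦ ((i : ℝ) / x) ^ ν * ((i : ℝ) / x - 1) ^ k) =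
      ∑ j ∈ range (k + 1), k.choose j * x⁻¹ ^ (k - j) * cmpMoment ν x j := by
  have hstein := (hasSum_rpow_mul_cmpWeight_iff hν.ne' hx).1
    (summable_rpow_mul_pow_mul_cmpWeight hν hx k).hasSum
  rw [cmpMean, ← hstein.tsum_eq, ← cmpMean]
  simp only [add_one_div_sub_one_pow]
  rw [cmpMean_sum]
  · simp only [cmpMean_const_mul, cmpMoment]
  · intro j _
    simpa only [mul_assoc] using
      ((summable_div_sub_one_pow_mul_cmpWeight hν hx j).mul_left (k.choose j * x⁻¹ ^ (k - j)))

theorem summable_rpow_sub_one_mul_pow_mul_cmpWeight (hν : 0 < ν) (hx : 0 < x) (k : ℕ) :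
    Summable fun i : ℕ ↦
      (((i : ℝ) / x) ^ ν - 1) * ((i : ℝ) / x - 1) ^ k * cmpWeight ν x i := by
  simp only [sub_mul, one_mul]
  exact (summable_rpow_mul_pow_mul_cmpWeight hν hx k).sub
    (summable_div_sub_one_pow_mul_cmpWeight hν hx k)

theorem cmpMean_rpow_sub_one_mul_pow (hν : 0 < ν) (hx : 0 < x) (k : ℕ) :
    cmpMean ν x (fun i ↦ (((i : ℝ) / x) ^ ν - 1) * ((i : ℝ) / x - 1) ^ k) =
      ∑ j ∈ range k, k.choose j * x⁻¹ ^ (k - j) * cmpMoment ν x j := by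
  simp only [sub_mul, one_mul]
  rw [cmpMean_sub (summable_rpow_mul_pow_mul_cmpWeight hν hx k)
    (summable_div_sub_one_pow_mul_cmpWeight hν hx k), cmpMean_rpow_mul_pow hν hx, sum_range_succ]
  simp [cmpMoment]

end Mean

section MomentBounds

variable {ν x : ℝ}

theorem min_one_mul_sub_one_sq_le {t : ℝ} (hν : 0 < ν) (ht : 0 ≤ t) :
    min 1 ν * (t - 1) ^ 2 ≤ (t ^ ν - 1) * (t ^ 2 - 1) := by
  have hm : 0 < min 1 ν := lt_min one_pos hν
  obtain h1 | h1 := le_total t 1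
  · have hbernoulli : t ^ ν ≤ 1 + min 1 ν * (t - 1) := by
      rcases ht.eq_or_lt with rfl | ht'
      · simp [Real.zero_rpow hν.ne']
      calc t ^ ν ≤ t ^ min 1 ν := Real.rpow_le_rpow_of_exponent_ge ht' h1 (min_le_right _ _)
        _ = (1 + (t - 1)) ^ min 1 ν := by rw [add_sub_cancel]
        _ ≤ _ := rpow_one_add_le_one_add_mul_self (by linarith) hm.le (min_le_left _ _)
    nlinarith [mul_nonneg (sub_nonneg.2 h1) (add_nonneg ht zero_le_one),
      mul_nonneg (mul_nonneg hm.le ht) (sq_nonneg (t - 1)),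
      mul_nonneg (sub_nonneg.2 hbernoulli)
        (mul_nonneg (sub_nonneg.2 h1) (add_nonneg ht zero_le_one))]
  · have ht' : 0 < t := by linarith
    have hlog : ν * (1 - t⁻¹) ≤ t ^ ν - 1 := by
      have hexp := Real.add_one_le_exp (Real.log t * ν)
      rw [← Real.rpow_def_of_pos ht'] at hexp
      nlinarith [Real.one_sub_inv_le_log_of_pos ht']
    calc min 1 ν * (t - 1) ^ 2 ≤ ν * (t - 1) ^ 2 := by gcongr; exact min_le_right _ _
      _ ≤ ν * (t - 1) ^ 2 + ν * t⁻¹ * (t - 1) ^ 2 := le_add_of_nonneg_right (by positivity)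
      _ = ν * (1 - t⁻¹) * (t ^ 2 - 1) := by field_simp; ring
      _ ≤ (t ^ ν - 1) * (t ^ 2 - 1) := by
        have : 0 ≤ t ^ 2 - 1 := by nlinarith
        gcongr

theorem cmpMoment_nonneg (hν : 0 < ν) (hx : 0 < x) {k : ℕ} (hk : Even k) : 0 ≤ cmpMoment ν x k :=
  div_nonneg (tsum_nonneg fun i ↦ mul_nonneg (hk.pow_nonneg _) (cmpWeight_pos hx i).le)
    (tsum_cmpWeight_pos hν hx).le

theorem abs_cmpMean_le_sum_cmpMoment {f : ℕ → ℝ} {C : ℝ} {n q : ℕ} (hν : 0 < ν) (hx : 0 < x)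
    (hf : ∀ i : ℕ, |f i| ≤
      C * (((i : ℝ) / x - 1) ^ (2 * n) * (1 + ((i : ℝ) / x - 1) ^ 2) ^ q)) :
    |cmpMean ν x f| ≤ C * ∑ j ∈ range (q + 1), q.choose j * cmpMoment ν x (2 * (n + j)) := by
  have hexpand (u : ℝ) : C * (u ^ (2 * n) * (1 + u ^ 2) ^ q) =
      C * ∑ j ∈ range (q + 1), q.choose j * u ^ (2 * (n + j)) := by
    rw [add_comm, add_pow, mul_sum]
    congr 1
    exact sum_congr rfl fun j _ ↦ by ring
  have hsum (j : ℕ) : Summable fun i : ℕ ↦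
      q.choose j * ((i : ℝ) / x - 1) ^ (2 * (n + j)) * cmpWeight ν x i := by
    simpa only [mul_assoc] using
      (summable_div_sub_one_pow_mul_cmpWeight hν hx (2 * (n + j))).mul_left (q.choose j : ℝ)
  simp only [hexpand] at hf
  refine (abs_cmpMean_le hν hx hf ?_).trans_eq ?_
  · simp only [mul_assoc C, sum_mul]
    exact (summable_sum fun j _ ↦ hsum j).mul_left C
  · simp only [cmpMean_const_mul, cmpMean_sum fun j _ ↦ hsum j, cmpMoment]

theorem abs_cmpMoment_odd_le (hν : 0 < ν) (hx : 0 < x) (k : ℕ) :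
    |cmpMoment ν x (2 * k + 1)| ≤ cmpMoment ν x (2 * k) + cmpMoment ν x (2 * k + 2) := by
  have hodd := abs_cmpMean_le_sum_cmpMoment (f := fun i : ℕ ↦ ((i : ℝ) / x - 1) ^ (2 * k + 1))
    (C := 1) (n := k) (q := 1) hν hx fun i ↦ by
      set u := (i : ℝ) / x - 1
      rw [pow_succ, abs_mul, abs_of_nonneg ((even_two_mul k).pow_nonneg u), pow_one, one_mul]
      refine mul_le_mul_of_nonneg_left ?_ ((even_two_mul k).pow_nonneg u)
      rw [abs_le]
      constructor <;> nlinarith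
  rw [← cmpMoment] at hodd
  simpa [sum_range_succ, mul_add] using hodd

theorem min_one_mul_cmpMoment_le (hν : 0 < ν) (hx : 0 < x) (k : ℕ) :
    min 1 ν * cmpMoment ν x (2 * k + 2) ≤
      2 * ∑ j ∈ range (2 * k + 1),
          (2 * k + 1).choose j * x⁻¹ ^ (2 * k + 1 - j) * cmpMoment ν x j +
        ∑ j ∈ range (2 * k + 2),
          (2 * k + 2).choose j * x⁻¹ ^ (2 * k + 2 - j) * cmpMoment ν x j := by
  have hsum := summable_rpow_sub_one_mul_pow_mul_cmpWeight (ν := ν) hν hx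
  have hsum' : Summable fun i : ℕ ↦
      2 * ((((i : ℝ) / x) ^ ν - 1) * ((i : ℝ) / x - 1) ^ (2 * k + 1)) * cmpWeight ν x i := by
    simpa only [mul_assoc] using (hsum (2 * k + 1)).mul_left 2
  rw [← cmpMean_rpow_sub_one_mul_pow hν hx, ← cmpMean_rpow_sub_one_mul_pow hν hx, cmpMoment,
    ← cmpMean_const_mul, ← cmpMean_const_mul, ← cmpMean_add hsum' (hsum (2 * k + 2))]
  refine cmpMean_mono hν hx (fun i ↦ ?_) ?_ ?_
  · calc min 1 ν * ((i : ℝ) / x - 1) ^ (2 * k + 2)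
        = min 1 ν * ((i : ℝ) / x - 1) ^ 2 * ((i : ℝ) / x - 1) ^ (2 * k) := by ring
      _ ≤ (((i : ℝ) / x) ^ ν - 1) * (((i : ℝ) / x) ^ 2 - 1) * ((i : ℝ) / x - 1) ^ (2 * k) :=
        mul_le_mul_of_nonneg_right (min_one_mul_sub_one_sq_le hν (by positivity))
          ((even_two_mul k).pow_nonneg _)
      _ = _ := by ring
  · simpa only [mul_assoc] using
      (summable_div_sub_one_pow_mul_cmpWeight hν hx (2 * k + 2)).mul_left (min 1 ν)
  · simpa only [add_mul] using hsum'.add (hsum (2 * k + 2))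

theorem isBigO_inv_pow_of_le {m n : ℕ} (hmn : m ≤ n) :
    (fun x : ℝ ↦ x⁻¹ ^ n) =O[atTop] fun x ↦ x⁻¹ ^ m := by
  refine IsBigO.of_bound 1 ?_
  filter_upwards [eventually_ge_atTop 1] with x hx
  rw [one_mul, norm_pow, norm_pow]
  refine pow_le_pow_of_le_one (norm_nonneg _) ?_ hmn
  rw [norm_inv]
  exact inv_le_one_of_one_le₀ (hx.trans (le_abs_self x))

theorem isBigO_inv_pow_mul {f : ℝ → ℝ} {j m n : ℕ} (hf : f =O[atTop] fun x ↦ x⁻¹ ^ n)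
    (hm : m ≤ j + n) : (fun x ↦ x⁻¹ ^ j * f x) =O[atTop] fun x ↦ x⁻¹ ^ m := by
  refine ((isBigO_refl (fun x : ℝ ↦ x⁻¹ ^ j) atTop).mul hf).trans ?_
  simpa only [← pow_add] using isBigO_inv_pow_of_le hm

theorem isBigO_cmpMoment_even_succ {k : ℕ} (hν : 0 < ν)
    (hk : ∀ i ≤ 2 * k, (cmpMoment ν · i) =O[atTop] fun x ↦ x⁻¹ ^ (i / 2)) :
    (cmpMoment ν · (2 * k + 2)) =O[atTop] fun x ↦ x⁻¹ ^ (k + 1) := by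
  set g : ℝ → ℝ := fun x ↦
    2 * ∑ j ∈ range (2 * k + 1), (2 * k + 1).choose j * (x⁻¹ ^ (2 * k + 1 - j) * cmpMoment ν x j) +
    ∑ j ∈ range (2 * k + 1), (2 * k + 2).choose j * (x⁻¹ ^ (2 * k + 2 - j) * cmpMoment ν x j) +
    (2 * k + 2) * (x⁻¹ ^ 1 * cmpMoment ν x (2 * k)) with hg
  have hgO : g =O[atTop] fun x ↦ x⁻¹ ^ (k + 1) := by
    have hlow {m : ℕ} (hm : 2 * k + 1 ≤ m) : (fun x ↦ ∑ j ∈ range (2 * k + 1),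
        m.choose j * (x⁻¹ ^ (m - j) * cmpMoment ν x j)) =O[atTop] fun x ↦ x⁻¹ ^ (k + 1) := by
      refine IsBigO.fun_sum fun j hj ↦ ?_
      rw [Finset.mem_range] at hj
      exact (isBigO_inv_pow_mul (hk j (by omega)) (by omega)).const_mul_left _
    exact (((hlow le_rfl).const_mul_left 2).add (hlow (Nat.le_succ _))).add
      ((isBigO_inv_pow_mul (hk (2 * k) le_rfl) (by omega)).const_mul_left _)
  have hmin : 0 < min 1 ν := lt_min one_pos hν
  refine (IsBigO.of_bound (2 / min 1 ν) ?_).trans hgO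
  have hsmall : Tendsto (fun x : ℝ ↦ (2 * k + 2) * x⁻¹) atTop (𝓝 0) := by
    simpa using tendsto_inv_atTop_zero.const_mul (2 * k + 2 : ℝ)
  filter_upwards [eventually_gt_atTop 0, hsmall.eventually_le_const (half_pos hmin)] with x hx hxk
  have heven := cmpMoment_nonneg hν hx (k := 2 * k + 2) ⟨k + 1, by ring⟩
  have hmain : min 1 ν * cmpMoment ν x (2 * k + 2) ≤
      g x + (2 * k + 2) * x⁻¹ * cmpMoment ν x (2 * k + 2) := by
    have hodd := mul_le_mul_of_nonneg_left (abs_le.1 (abs_cmpMoment_odd_le hν hx k)).2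
      (by positivity : 0 ≤ (2 * k + 2) * x⁻¹)
    have hle := min_one_mul_cmpMoment_le hν hx k
    rw [sum_range_succ _ (2 * k + 1), show 2 * k + 2 - (2 * k + 1) = 1 by omega,
      Nat.choose_succ_self_right] at hle
    simp only [hg, ← mul_assoc]
    push_cast at hle
    linarith
  rw [Real.norm_of_nonneg heven, div_mul_eq_mul_div, le_div_iff₀ hmin]
  have := mul_le_mul_of_nonneg_right hxk heven
  linarith [le_abs_self (g x), Real.norm_eq_abs (g x)]

theorem isBigO_cmpMoment (hν : 0 < ν) (k : ℕ) :
    (cmpMoment ν · k) =O[atTop] fun x ↦ x⁻¹ ^ (k / 2) := by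
  suffices h : ∀ k, ∀ i ≤ 2 * k, (cmpMoment ν · i) =O[atTop] fun x ↦ x⁻¹ ^ (i / 2) from
    h k k (by omega)
  intro k
  induction k with
  | zero =>
    intro i hi
    obtain rfl : i = 0 := by omega
    refine (isBigO_refl (fun _ ↦ (1 : ℝ)) atTop).congr' ?_ (by simp)
    filter_upwards [eventually_gt_atTop 0] with x hx using (cmpMoment_zero hν hx).symm
  | succ k ih =>
    have heven := isBigO_cmpMoment_even_succ hν ih
    intro i hi
    obtain hi | rfl | rfl : i ≤ 2 * k ∨ i = 2 * k + 1 ∨ i = 2 * k + 2 := by omega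
    · exact ih i hi
    · rw [show (2 * k + 1) / 2 = k by omega]
      have hsum : (fun x ↦ cmpMoment ν x (2 * k) + cmpMoment ν x (2 * k + 2)) =O[atTop]
          fun x ↦ x⁻¹ ^ k :=
        (by simpa using ih (2 * k) le_rfl : _ =O[atTop] _).add
          (heven.trans (isBigO_inv_pow_of_le k.le_succ))
      refine (IsBigO.of_bound' ?_).trans hsum
      filter_upwards [eventually_gt_atTop 0] with x hx
      exact (abs_cmpMoment_odd_le hν hx k).trans (le_abs_self _)
    · rwa [show (2 * k + 2) / 2 = k + 1 by omega]

end MomentBounds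

section MomentRelations

variable {ν : ℝ}

theorem abs_le_one_add_sq (u : ℝ) : |u| ≤ 1 + u ^ 2 := by
  nlinarith [sq_nonneg (|u| - 1), sq_abs u]

theorem abs_pow_le_pow_mul_one_add_sq_pow (u : ℝ) {m n : ℕ} (hmn : 2 * n ≤ m) :
    |u| ^ m ≤ u ^ (2 * n) * (1 + u ^ 2) ^ (m - 2 * n) := by
  rw [← pow_mul_pow_sub |u| hmn, (even_two_mul n).pow_abs]
  have := (even_two_mul n).pow_nonneg u
  gcongr
  exact abs_le_one_add_sq u

theorem eventually_abs_rpow_sub_binomial_le (ν : ℝ) (N : ℕ) : ∃ C, ∀ᶠ u in 𝓝 (0 : ℝ),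
    |(1 + u) ^ ν - ∑ j ∈ range N, Ring.choose ν j * u ^ j| ≤ C * |u| ^ N := by
  simpa [FormalMultilinearSeries.partialSum, binomialSeries, mul_comm] using
    ((Real.one_add_rpow_hasFPowerSeriesAt_zero (a := ν)).isBigO_sub_partialSum_pow N).bound

theorem exists_abs_rpow_sub_binomial_le_pow (hν : 0 ≤ ν) (N : ℕ) :
    ∃ B, 0 ≤ B ∧ ∃ p : ℕ, ∀ u, -1 ≤ u →
      |(1 + u) ^ ν - ∑ j ∈ range N, Ring.choose ν j * u ^ j| ≤ B * (1 + u ^ 2) ^ p := by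
  refine ⟨2 ^ (⌈ν⌉₊ + N) + ∑ j ∈ range N, |Ring.choose ν j|, by positivity, ⌈ν⌉₊ + N,
    fun u hu ↦ (abs_sub _ _).trans ?_⟩
  have hbase : 1 ≤ 1 + u ^ 2 := by nlinarith
  rw [add_mul]
  refine add_le_add ?_ ?_
  · rw [abs_of_nonneg (Real.rpow_nonneg (by linarith) _), ← mul_pow]
    calc (1 + u) ^ ν ≤ (2 * (1 + u ^ 2)) ^ ν :=
          Real.rpow_le_rpow (by linarith) (by nlinarith [sq_nonneg (u - 1)]) hν
      _ ≤ (2 * (1 + u ^ 2)) ^ (⌈ν⌉₊ : ℝ) :=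
          Real.rpow_le_rpow_of_exponent_le (by linarith) (Nat.le_ceil ν)
      _ = (2 * (1 + u ^ 2)) ^ ⌈ν⌉₊ := Real.rpow_natCast _ _
      _ ≤ (2 * (1 + u ^ 2)) ^ (⌈ν⌉₊ + N) := pow_le_pow_right₀ (by linarith) (Nat.le_add_right _ _)
  · refine (abs_sum_le_sum_abs _ _).trans ?_
    rw [sum_mul]
    refine sum_le_sum fun j hj ↦ ?_
    rw [abs_mul, abs_pow]
    gcongr
    calc |u| ^ j ≤ (1 + u ^ 2) ^ j := by gcongr; exact abs_le_one_add_sq u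
      _ ≤ _ := pow_le_pow_right₀ hbase (by grind)

theorem exists_abs_rpow_sub_binomial_le (hν : 0 ≤ ν) (N : ℕ) :
    ∃ C, 0 ≤ C ∧ ∃ p : ℕ, ∀ u, -1 ≤ u →
      |(1 + u) ^ ν - ∑ j ∈ range N, Ring.choose ν j * u ^ j| ≤
        C * (|u| ^ N * (1 + u ^ 2) ^ p) := by
  obtain ⟨C, hC⟩ := eventually_abs_rpow_sub_binomial_le ν N
  obtain ⟨δ, hδ, hnear⟩ := Metric.eventually_nhds_iff.1 hC
  obtain ⟨B, hB, p, hfar⟩ := exists_abs_rpow_sub_binomial_le_pow hν N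
  refine ⟨|C| + B / δ ^ N, by positivity, p, fun u hu ↦ ?_⟩
  rw [add_mul]
  have hbase : 1 ≤ (1 + u ^ 2) ^ p := one_le_pow₀ (by nlinarith)
  obtain hu' | hu' := lt_or_ge |u| δ
  · calc _ ≤ C * |u| ^ N := hnear (by simpa using hu')
      _ ≤ |C| * |u| ^ N := by gcongr; exact le_abs_self C
      _ ≤ |C| * (|u| ^ N * (1 + u ^ 2) ^ p) := by
        gcongr
        exact le_mul_of_one_le_right (by positivity) hbase
      _ ≤ _ := le_add_of_nonneg_right (by positivity)
  · calc _ ≤ B * (1 + u ^ 2) ^ p := hfar u hu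
      _ ≤ B * ((|u| / δ) ^ N * (1 + u ^ 2) ^ p) := by
        gcongr
        exact le_mul_of_one_le_left (by positivity) (one_le_pow₀ ((one_le_div hδ).2 hu'))
      _ = B / δ ^ N * (|u| ^ N * (1 + u ^ 2) ^ p) := by rw [div_pow]; ring
      _ ≤ _ := le_add_of_nonneg_left (by positivity)

theorem isBigO_cmpMean {f : ℝ → ℕ → ℝ} {C : ℝ} {n q : ℕ} (hν : 0 < ν)
    (hf : ∀ x > 0, ∀ i : ℕ, |f x i| ≤
      C * (((i : ℝ) / x - 1) ^ (2 * n) * (1 + ((i : ℝ) / x - 1) ^ 2) ^ q)) :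
    (fun x ↦ cmpMean ν x (f x)) =O[atTop] fun x ↦ x⁻¹ ^ n := by
  have hsum : (fun x ↦ C * ∑ j ∈ range (q + 1), q.choose j * cmpMoment ν x (2 * (n + j)))
      =O[atTop] fun x ↦ x⁻¹ ^ n :=
    (IsBigO.fun_sum fun j _ ↦ (((isBigO_cmpMoment hν _).trans
      (isBigO_inv_pow_of_le (by omega))).const_mul_left _)).const_mul_left _
  refine (IsBigO.of_bound' ?_).trans hsum
  filter_upwards [eventually_gt_atTop 0] with x hx
  exact (abs_cmpMean_le_sum_cmpMoment hν hx (hf x hx)).trans (le_abs_self _)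

theorem exists_abs_binomial_mul_pow_sub_le (hν : 0 ≤ ν) {k n N : ℕ} (hN : 2 * n ≤ N + 1 + k) :
    ∃ C, ∃ q : ℕ, ∀ u, -1 ≤ u →
      |∑ j ∈ range N, Ring.choose ν (j + 1) * u ^ (k + (j + 1)) - ((1 + u) ^ ν - 1) * u ^ k| ≤
        C * (u ^ (2 * n) * (1 + u ^ 2) ^ q) := by
  obtain ⟨C, hC, p, htaylor⟩ := exists_abs_rpow_sub_binomial_le hν (N + 1)
  refine ⟨C, N + 1 + k - 2 * n + p, fun u hu ↦ ?_⟩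
  have hbound := htaylor u hu
  rw [sum_range_succ', Ring.choose_zero_right, pow_zero, mul_one] at hbound
  have hfactor : ∑ j ∈ range N, Ring.choose ν (j + 1) * u ^ (k + (j + 1)) -
      ((1 + u) ^ ν - 1) * u ^ k =
      -(u ^ k * ((1 + u) ^ ν - (∑ j ∈ range N, Ring.choose ν (j + 1) * u ^ (j + 1) + 1))) := by
    simp only [pow_add u k, mul_left_comm _ (u ^ k), ← mul_sum]
    ring
  rw [hfactor, abs_neg, abs_mul, abs_pow]
  calc _ ≤ |u| ^ k * (C * (|u| ^ (N + 1) * (1 + u ^ 2) ^ p)) := by gcongr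
    _ = C * (|u| ^ (N + 1 + k) * (1 + u ^ 2) ^ p) := by ring
    _ ≤ C * (u ^ (2 * n) * (1 + u ^ 2) ^ (N + 1 + k - 2 * n) * (1 + u ^ 2) ^ p) := by
      gcongr
      exact abs_pow_le_pow_mul_one_add_sq_pow u hN
    _ = _ := by ring

/-- Stein's equation for `(X / x - 1) ^ k`, with `(X / x) ^ ν` expanded in powers of
`X / x - 1`. -/
theorem isBigO_cmpMoment_relation (hν : 0 < ν) {k n N : ℕ} (hN : 2 * n ≤ N + 1 + k) :
    (fun x ↦ ∑ j ∈ range N, Ring.choose ν (j + 1) * cmpMoment ν x (k + (j + 1)) -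
        ∑ j ∈ range k, k.choose j * (x⁻¹ ^ (k - j) * cmpMoment ν x j))
      =O[atTop] fun x ↦ x⁻¹ ^ n := by
  obtain ⟨C, q, hbound⟩ := exists_abs_binomial_mul_pow_sub_le hν.le hN
  have hmean := isBigO_cmpMean (n := n) (q := q) (C := C) (f := fun x i ↦
    ∑ j ∈ range N, Ring.choose ν (j + 1) * ((i : ℝ) / x - 1) ^ (k + (j + 1)) -
      (((i : ℝ) / x) ^ ν - 1) * ((i : ℝ) / x - 1) ^ k) hν ?_
  · refine hmean.congr' ?_ .rfl
    filter_upwards [eventually_gt_atTop 0] with x hx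
    have hterm (j : ℕ) : Summable fun i : ℕ ↦
        Ring.choose ν (j + 1) * ((i : ℝ) / x - 1) ^ (k + (j + 1)) * cmpWeight ν x i := by
      simpa only [mul_assoc] using
        (summable_div_sub_one_pow_mul_cmpWeight hν hx (k + (j + 1))).mul_left
          (Ring.choose ν (j + 1))
    rw [cmpMean_sub ?_ (summable_rpow_sub_one_mul_pow_mul_cmpWeight hν hx k),
      cmpMean_rpow_sub_one_mul_pow hν hx, cmpMean_sum fun j _ ↦ hterm j]
    · simp only [cmpMean_const_mul, cmpMoment, mul_assoc]
    · simp only [sum_mul]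
      exact summable_sum fun j _ ↦ hterm j
  · intro x hx i
    simpa using hbound ((i : ℝ) / x - 1) (by linarith [show 0 ≤ (i : ℝ) / x by positivity])

end MomentRelations

section MomentSystems

section RingChoose

variable {K : Type*} [Field K] [CharZero K] (r : K)

theorem ringChoose_succ (n : ℕ) :
    Ring.choose r (n + 1) = Ring.choose r n * (r - n) / (n + 1) := by
  have hn : (n + 1 : K) ≠ 0 := n.cast_add_one_ne_zero
  have hfactorial : (n.factorial : K) ≠ 0 := mod_cast n.factorial_ne_zero
  have hchoose := Ring.descPochhammer_eq_factorial_smul_choose r (n + 1)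
  rw [descPochhammer_succ_right, Polynomial.smeval_mul,
    Ring.descPochhammer_eq_factorial_smul_choose, Polynomial.smeval_sub,
    Polynomial.smeval_natCast, Polynomial.smeval_X, Nat.factorial_succ] at hchoose
  simp only [nsmul_eq_mul, pow_one, pow_zero, mul_one, Nat.cast_mul, Nat.cast_succ] at hchoose
  rw [eq_div_iff hn]
  apply mul_left_cancel₀ hfactorial
  linear_combination -hchoose

theorem ringChoose_two : Ring.choose r 2 = r * (r - 1) / 2 := by
  rw [ringChoose_succ, Ring.choose_one_right]
  push_cast
  ring

theorem ringChoose_three : Ring.choose r 3 = r * (r - 1) * (r - 2) / 6 := by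
  rw [ringChoose_succ, ringChoose_two]
  push_cast
  ring

theorem ringChoose_four : Ring.choose r 4 = r * (r - 1) * (r - 2) * (r - 3) / 24 := by
  rw [ringChoose_succ, ringChoose_three]
  push_cast
  ring

theorem ringChoose_five : Ring.choose r 5 = r * (r - 1) * (r - 2) * (r - 3) * (r - 4) / 120 := by
  rw [ringChoose_succ, ringChoose_four]
  push_cast
  ring

theorem ringChoose_six :
    Ring.choose r 6 = r * (r - 1) * (r - 2) * (r - 3) * (r - 4) * (r - 5) / 720 := by
  rw [ringChoose_succ, ringChoose_five]
  push_cast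
  ring

end RingChoose

variable {V : Type*} [AddCommGroup V] [Module ℝ V]

/-- The linear relations between the classes `μ i j` of `x⁻¹ ^ j * cmpMoment ν x i` modulo
`O(x⁻¹ ^ 4)`, in an arbitrary real vector space. With `μ i j` of weight `i + 2 * j`, the relations
determine the classes in order of decreasing weight. -/
structure IsMomentSystem (ν : ℝ) (μ : ℕ → ℕ → V) : Prop where
  eq_zero : ∀ {i j}, 8 ≤ i + 2 * j → μ i j = 0
  relation : ∀ k j, ∑ i ∈ range 7, Ring.choose ν (i + 1) • μ (k + (i + 1)) j =
    ∑ i ∈ range k, (k.choose i : ℝ) • μ i (k - i + j)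

namespace IsMomentSystem

variable {ν : ℝ} {μ : ℕ → ℕ → V}

theorem weight_seven (h : IsMomentSystem ν μ) (hν : ν ≠ 0) :
    μ 1 3 = 0 ∧ μ 3 2 = 0 ∧ μ 5 1 = 0 ∧ μ 7 0 = 0 := by
  have h13 : μ 1 3 = 0 := by
    simpa [sum_range_succ, h.eq_zero, hν] using h.relation 0 3
  have h32 : μ 3 2 = 0 := by
    simpa [sum_range_succ, h.eq_zero, hν, h13] using h.relation 2 2
  have h51 : μ 5 1 = 0 := by
    simpa [sum_range_succ, h.eq_zero, Nat.choose, hν, h13, h32] using h.relation 4 1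
  have h70 : μ 7 0 = 0 := by
    simpa [sum_range_succ, h.eq_zero, Nat.choose, hν, h13, h32, h51] using h.relation 6 0
  exact ⟨h13, h32, h51, h70⟩

theorem weight_six (h : IsMomentSystem ν μ) (hν : ν ≠ 0) :
    μ 2 2 = (1 / ν) • μ 0 3 ∧ μ 4 1 = (3 / ν ^ 2) • μ 0 3 ∧ μ 6 0 = (15 / ν ^ 3) • μ 0 3 := by
  obtain ⟨h13, h32, h51, h70⟩ := h.weight_seven hν
  have r22 : ν • μ 2 2 = μ 0 3 := by
    simpa [sum_range_succ, h.eq_zero, h32] using h.relation 1 2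
  have r41 : ν • μ 4 1 = (3 : ℝ) • μ 2 2 := by
    simpa [sum_range_succ, h.eq_zero, Nat.choose, h13, h51] using h.relation 3 1
  have r60 : ν • μ 6 0 = (5 : ℝ) • μ 4 1 := by
    simpa [sum_range_succ, h.eq_zero, Nat.choose, h13, h32, h70] using h.relation 5 0
  have h22 : μ 2 2 = (1 / ν) • μ 0 3 := by
    linear_combination (norm := skip) (1 / ν) • r22
    match_scalars <;> field_simp <;> ring
  have h41 : μ 4 1 = (3 / ν ^ 2) • μ 0 3 := by
    linear_combination (norm := skip) (1 / ν) • (r41 + (3 : ℝ) • h22)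
    match_scalars <;> field_simp <;> ring
  refine ⟨h22, h41, ?_⟩
  linear_combination (norm := skip) (1 / ν) • (r60 + (5 : ℝ) • h41)
  match_scalars <;> field_simp <;> ring

theorem weight_five (h : IsMomentSystem ν μ) (hν : ν ≠ 0) :
    μ 1 2 = (1 / (2 * ν) - 1 / 2) • μ 0 3 ∧
      μ 3 1 = (5 / (2 * ν ^ 2) - 3 / (2 * ν)) • μ 0 3 ∧
      μ 5 0 = (35 / (2 * ν ^ 3) - 15 / (2 * ν ^ 2)) • μ 0 3 := by
  obtain ⟨h13, h32, h51, h70⟩ := h.weight_seven hν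
  obtain ⟨h22, h41, h60⟩ := h.weight_six hν
  have r12 : ν • μ 1 2 + Ring.choose ν 2 • μ 2 2 = 0 := by
    simpa [sum_range_succ, h.eq_zero, h32] using h.relation 0 2
  have r31 : ν • μ 3 1 + Ring.choose ν 2 • μ 4 1 = μ 0 3 + (2 : ℝ) • μ 1 2 := by
    simpa [sum_range_succ, h.eq_zero, h51] using h.relation 2 1
  have r50 : ν • μ 5 0 + Ring.choose ν 2 • μ 6 0 = (6 : ℝ) • μ 2 2 + (4 : ℝ) • μ 3 1 := by
    simpa [sum_range_succ, h.eq_zero, Nat.choose, h13, h70] using h.relation 4 0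
  rw [ringChoose_two] at r12 r31 r50
  have h12 : μ 1 2 = (1 / (2 * ν) - 1 / 2) • μ 0 3 := by
    linear_combination (norm := skip) (1 / ν) • (r12 - (ν * (ν - 1) / 2) • h22)
    match_scalars <;> field_simp <;> ring
  have h31 : μ 3 1 = (5 / (2 * ν ^ 2) - 3 / (2 * ν)) • μ 0 3 := by
    linear_combination (norm := skip)
      (1 / ν) • (r31 - (ν * (ν - 1) / 2) • h41 + (2 : ℝ) • h12)
    match_scalars <;> field_simp <;> ring
  refine ⟨h12, h31, ?_⟩
  linear_combination (norm := skip)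
    (1 / ν) • (r50 - (ν * (ν - 1) / 2) • h60 + (4 : ℝ) • h31 + (6 : ℝ) • h22)
  match_scalars <;> field_simp <;> ring

theorem weight_four (h : IsMomentSystem ν μ) (hν : ν ≠ 0) :
    μ 2 1 = (1 / ν) • μ 0 2 + (1 / (4 * ν ^ 2) - 1 / (2 * ν) + 1 / 4) • μ 0 3 ∧
      μ 4 0 = (3 / ν ^ 2) • μ 0 2 +
        (9 / (2 * ν ^ 3) - 5 / ν ^ 2 + 3 / (2 * ν)) • μ 0 3 := by
  obtain ⟨-, -, h51, h70⟩ := h.weight_seven hν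
  obtain ⟨-, h41, h60⟩ := h.weight_six hν
  obtain ⟨h12, h31, h50⟩ := h.weight_five hν
  have r21 : ν • μ 2 1 + Ring.choose ν 2 • μ 3 1 + Ring.choose ν 3 • μ 4 1 = μ 0 2 := by
    simpa [sum_range_succ, h.eq_zero, h51] using h.relation 1 1
  have r40 : ν • μ 4 0 + Ring.choose ν 2 • μ 5 0 + Ring.choose ν 3 • μ 6 0 =
      μ 0 3 + (3 : ℝ) • μ 1 2 + (3 : ℝ) • μ 2 1 := by
    simpa [sum_range_succ, h.eq_zero, Nat.choose, h70] using h.relation 3 0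
  rw [ringChoose_two, ringChoose_three] at r21 r40
  have h21 : μ 2 1 = (1 / ν) • μ 0 2 + (1 / (4 * ν ^ 2) - 1 / (2 * ν) + 1 / 4) • μ 0 3 := by
    linear_combination (norm := skip)
      (1 / ν) • (r21 - (ν * (ν - 1) / 2) • h31 - (ν * (ν - 1) * (ν - 2) / 6) • h41)
    match_scalars <;> field_simp <;> ring
  refine ⟨h21, ?_⟩
  linear_combination (norm := skip)
    (1 / ν) • (r40 - (ν * (ν - 1) / 2) • h50 - (ν * (ν - 1) * (ν - 2) / 6) • h60 +
      (3 : ℝ) • h12 + (3 : ℝ) • h21)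
  match_scalars <;> field_simp <;> ring

theorem weight_three (h : IsMomentSystem ν μ) (hν : ν ≠ 0) :
    μ 1 1 = (1 / (2 * ν) - 1 / 2) • μ 0 2 + (1 / (24 * ν ^ 2) - 1 / 24) • μ 0 3 ∧
      μ 3 0 = (5 / (2 * ν ^ 2) - 3 / (2 * ν)) • μ 0 2 +
        (1 / (4 * ν ^ 3) - 3 / (8 * ν ^ 2) + 1 / (4 * ν) - 1 / 8) • μ 0 3 := by
  obtain ⟨-, -, h51, h70⟩ := h.weight_seven hν
  obtain ⟨-, h41, h60⟩ := h.weight_six hν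
  obtain ⟨-, h31, h50⟩ := h.weight_five hν
  obtain ⟨h21, h40⟩ := h.weight_four hν
  have r11 : ν • μ 1 1 + Ring.choose ν 2 • μ 2 1 + Ring.choose ν 3 • μ 3 1 +
      Ring.choose ν 4 • μ 4 1 = 0 := by
    simpa [sum_range_succ, h.eq_zero, h51] using h.relation 0 1
  have r30 : ν • μ 3 0 + Ring.choose ν 2 • μ 4 0 + Ring.choose ν 3 • μ 5 0 +
      Ring.choose ν 4 • μ 6 0 = μ 0 2 + (2 : ℝ) • μ 1 1 := by
    simpa [sum_range_succ, h.eq_zero, h70] using h.relation 2 0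
  rw [ringChoose_two, ringChoose_three, ringChoose_four] at r11 r30
  have h11 : μ 1 1 = (1 / (2 * ν) - 1 / 2) • μ 0 2 + (1 / (24 * ν ^ 2) - 1 / 24) • μ 0 3 := by
    linear_combination (norm := skip)
      (1 / ν) • (r11 - (ν * (ν - 1) / 2) • h21 - (ν * (ν - 1) * (ν - 2) / 6) • h31 -
        (ν * (ν - 1) * (ν - 2) * (ν - 3) / 24) • h41)
    match_scalars <;> field_simp <;> ring
  refine ⟨h11, ?_⟩
  linear_combination (norm := skip)
    (1 / ν) • (r30 - (ν * (ν - 1) / 2) • h40 - (ν * (ν - 1) * (ν - 2) / 6) • h50 -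
      (ν * (ν - 1) * (ν - 2) * (ν - 3) / 24) • h60 + (2 : ℝ) • h11)
  match_scalars <;> field_simp <;> ring

theorem weight_two (h : IsMomentSystem ν μ) (hν : ν ≠ 0) :
    μ 2 0 = (1 / ν) • μ 0 1 + (1 / (4 * ν ^ 2) - 1 / (2 * ν) + 1 / 4) • μ 0 2 +
      (1 / 24 - 1 / (24 * ν ^ 2)) • μ 0 3 := by
  obtain ⟨-, -, -, h70⟩ := h.weight_seven hν
  obtain ⟨-, -, h60⟩ := h.weight_six hν
  obtain ⟨-, -, h50⟩ := h.weight_five hν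
  obtain ⟨-, h40⟩ := h.weight_four hν
  obtain ⟨-, h30⟩ := h.weight_three hν
  have r20 : ν • μ 2 0 + Ring.choose ν 2 • μ 3 0 + Ring.choose ν 3 • μ 4 0 +
      Ring.choose ν 4 • μ 5 0 + Ring.choose ν 5 • μ 6 0 = μ 0 1 := by
    simpa [sum_range_succ, h.eq_zero, h70] using h.relation 1 0
  rw [ringChoose_two, ringChoose_three, ringChoose_four, ringChoose_five] at r20
  linear_combination (norm := skip)
    (1 / ν) • (r20 - (ν * (ν - 1) / 2) • h30 - (ν * (ν - 1) * (ν - 2) / 6) • h40 -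
      (ν * (ν - 1) * (ν - 2) * (ν - 3) / 24) • h50 -
      (ν * (ν - 1) * (ν - 2) * (ν - 3) * (ν - 4) / 120) • h60)
  match_scalars <;> field_simp <;> ring

theorem weight_one (h : IsMomentSystem ν μ) (hν : ν ≠ 0) :
    μ 1 0 = (1 / (2 * ν) - 1 / 2) • μ 0 1 + (1 / (24 * ν ^ 2) - 1 / 24) • μ 0 2 +
      (1 / (24 * ν ^ 3) - 1 / (24 * ν)) • μ 0 3 := by
  obtain ⟨-, -, -, h70⟩ := h.weight_seven hν
  obtain ⟨-, -, h60⟩ := h.weight_six hν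
  obtain ⟨-, -, h50⟩ := h.weight_five hν
  obtain ⟨-, h40⟩ := h.weight_four hν
  obtain ⟨-, h30⟩ := h.weight_three hν
  have h20 := h.weight_two hν
  have r10 : ν • μ 1 0 + Ring.choose ν 2 • μ 2 0 + Ring.choose ν 3 • μ 3 0 +
      Ring.choose ν 4 • μ 4 0 + Ring.choose ν 5 • μ 5 0 + Ring.choose ν 6 • μ 6 0 = 0 := by
    simpa [sum_range_succ, h.eq_zero, h70] using h.relation 0 0
  rw [ringChoose_two, ringChoose_three, ringChoose_four, ringChoose_five, ringChoose_six] at r10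
  linear_combination (norm := skip)
    (1 / ν) • (r10 - (ν * (ν - 1) / 2) • h20 - (ν * (ν - 1) * (ν - 2) / 6) • h30 -
      (ν * (ν - 1) * (ν - 2) * (ν - 3) / 24) • h40 -
      (ν * (ν - 1) * (ν - 2) * (ν - 3) * (ν - 4) / 120) • h50 -
      (ν * (ν - 1) * (ν - 2) * (ν - 3) * (ν - 4) * (ν - 5) / 720) • h60)
  match_scalars <;> field_simp <;> ring

end IsMomentSystem

/-- The functions that are `O(g)` along the filter `l`, as a submodule; the quotient by it is the
space in which asymptotic expansions up to `O(g)` are computed. -/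
def isBigOSubmodule {α : Type*} (l : Filter α) (g : α → ℝ) : Submodule ℝ (α → ℝ) where
  carrier := {f | f =O[l] g}
  add_mem' hf hf' := IsBigO.add hf hf'
  zero_mem' := isBigO_zero g l
  smul_mem' c _ hf := IsBigO.const_smul_left hf c

theorem isMomentSystem_cmpMoment {ν : ℝ} (hν : 0 < ν) :
    IsMomentSystem ν fun i j ↦ (isBigOSubmodule atTop fun x : ℝ ↦ x⁻¹ ^ 4).mkQ
      fun x ↦ x⁻¹ ^ j * cmpMoment ν x i where
  eq_zero {i j} hij := (Submodule.Quotient.mk_eq_zero _).2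
    (isBigO_inv_pow_mul (isBigO_cmpMoment hν i) (by omega))
  relation k j := by
    simp only [← map_smul, ← map_sum]
    rw [Submodule.mkQ_apply, Submodule.mkQ_apply, Submodule.Quotient.eq]
    have hrelation := isBigO_inv_pow_mul (j := j) (m := 4)
      (isBigO_cmpMoment_relation hν (k := k) (n := 4) (N := 7) (by omega)) (by omega)
    refine hrelation.congr_left fun x ↦ ?_
    simp [mul_sub, mul_sum, pow_add, mul_assoc, mul_left_comm]

theorem isBigO_cmpMoment_one_sub {ν : ℝ} (hν : 0 < ν) :
    (fun x ↦ cmpMoment ν x 1 - ((1 / (2 * ν) - 1 / 2) * x⁻¹ +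
      (1 / (24 * ν ^ 2) - 1 / 24) * x⁻¹ ^ 2 + (1 / (24 * ν ^ 3) - 1 / (24 * ν)) * x⁻¹ ^ 3))
      =O[atTop] fun x ↦ x⁻¹ ^ 4 := by
  have hone := (isMomentSystem_cmpMoment hν).weight_one hν.ne'
  simp only [← map_smul, ← map_add] at hone
  rw [Submodule.mkQ_apply, Submodule.mkQ_apply, Submodule.Quotient.eq] at hone
  refine IsBigO.congr' hone ?_ .rfl
  filter_upwards [eventually_gt_atTop 0] with x hx
  simp [cmpMoment_zero hν hx]

end MomentSystems

section Derivative

variable {ν x : ℝ}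

theorem cmpWeight_le_cmpWeight {y : ℝ} (hν : 0 ≤ ν) (hy : 0 ≤ y) (hyx : y ≤ x) (i : ℕ) :
    cmpWeight ν y i ≤ cmpWeight ν x i := by
  unfold cmpWeight
  gcongr

theorem hasDerivAt_cmpWeight (hx : 0 < x) (i : ℕ) :
    HasDerivAt (fun y ↦ cmpWeight ν y i) (ν * (i / x) * cmpWeight ν x i) x := by
  have hbase : HasDerivAt (fun y : ℝ ↦ y ^ i / i.factorial) (i / x * (x ^ i / i.factorial)) x := by
    refine ((hasDerivAt_pow i x).div_const _).congr_deriv ?_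
    rcases i with - | i
    · simp
    · rw [Nat.add_sub_cancel, pow_succ]
      field_simp
  refine (hbase.rpow_const (p := ν) (Or.inl (by positivity))).congr_deriv ?_
  rw [Real.rpow_sub_one (by positivity), cmpWeight]
  field_simp

theorem summable_div_mul_cmpWeight (hν : 0 < ν) (hx : 0 < x) :
    Summable fun i : ℕ ↦ (i : ℝ) / x * cmpWeight ν x i := by
  refine ((summable_div_sub_one_pow_mul_cmpWeight hν hx 1).add (summable_cmpWeight hν hx)).congr
    fun i ↦ ?_
  ring

theorem hasDerivAt_tsum_cmpWeight (hν : 0 < ν) (hx : 0 < x) :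
    HasDerivAt (fun y ↦ ∑' i, cmpWeight ν y i) (∑' i : ℕ, ν * (i / x) * cmpWeight ν x i) x := by
  have hpos {y : ℝ} (hy : y ∈ Ioo (x / 2) (2 * x)) : 0 < y := (half_pos hx).trans hy.1
  have hmem : x ∈ Ioo (x / 2) (2 * x) := ⟨half_lt_self hx, by linarith⟩
  have hbound : Summable fun i : ℕ ↦ ν * 4 * (i / (2 * x) * cmpWeight ν (2 * x) i) :=
    (summable_div_mul_cmpWeight hν (by positivity)).mul_left _
  refine hasDerivAt_tsum_of_isPreconnected hbound isOpen_Ioo isPreconnected_Ioo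
    (fun i y hy ↦ hasDerivAt_cmpWeight (hpos hy) i) (fun i y hy ↦ ?_) hmem
    (summable_cmpWeight hν hx) hmem
  have hdiv : (i : ℝ) / y ≤ 4 * (i / (2 * x)) := by
    calc (i : ℝ) / y ≤ i / (x / 2) := by gcongr; exact hy.1.le
      _ = 4 * (i / (2 * x)) := by field_simp; norm_num
  have hy0 := hpos hy
  rw [Real.norm_of_nonneg (mul_nonneg (by positivity) (cmpWeight_pos hy0 i).le)]
  calc ν * (i / y) * cmpWeight ν y i ≤ ν * (4 * (i / (2 * x))) * cmpWeight ν (2 * x) i :=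
        mul_le_mul (mul_le_mul_of_nonneg_left hdiv hν.le)
          (cmpWeight_le_cmpWeight hν.le hy0.le hy.2.le i) (cmpWeight_pos hy0 i).le (by positivity)
    _ = ν * 4 * (i / (2 * x) * cmpWeight ν (2 * x) i) := by ring

theorem tsum_div_mul_cmpWeight (hν : 0 < ν) (hx : 0 < x) :
    ∑' i : ℕ, (i : ℝ) / x * cmpWeight ν x i = (1 + cmpMoment ν x 1) * ∑' i, cmpWeight ν x i := by
  have hsum : ∑' i : ℕ, (i : ℝ) / x * cmpWeight ν x i =
      (∑' i : ℕ, ((i : ℝ) / x - 1) ^ 1 * cmpWeight ν x i) + ∑' i, cmpWeight ν x i := by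
    rw [← (summable_div_sub_one_pow_mul_cmpWeight hν hx 1).tsum_add (summable_cmpWeight hν hx)]
    exact tsum_congr fun i ↦ by ring
  have hpos := (tsum_cmpWeight_pos hν hx).ne'
  rw [hsum, cmpMoment, cmpMean]
  field_simp
  ring

theorem hasDerivAt_log_tsum_cmpWeight (hν : 0 < ν) (hx : 0 < x) :
    HasDerivAt (fun y ↦ Real.log (∑' i, cmpWeight ν y i)) (ν * (1 + cmpMoment ν x 1)) x := by
  have hpos := (tsum_cmpWeight_pos hν hx).ne'
  refine ((hasDerivAt_tsum_cmpWeight hν hx).log hpos).congr_deriv ?_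
  simp only [mul_assoc, tsum_mul_left, tsum_div_mul_cmpWeight hν hx]
  field_simp

end Derivative

section Integration

theorem norm_sub_le_of_norm_deriv_le_inv_pow {E : Type*} [NormedAddCommGroup E] [NormedSpace ℝ E]
    {f f' : ℝ → E} {C x y : ℝ} {n : ℕ} (hx : 0 < x) (hxy : x ≤ y)
    (hf : ∀ t ≥ x, HasDerivAt f (f' t) t) (hC : ∀ t ≥ x, ‖f' t‖ ≤ C * t⁻¹ ^ (n + 2)) :
    ‖f y - f x‖ ≤ C / (n + 1) * (x⁻¹ ^ (n + 1) - y⁻¹ ^ (n + 1)) := by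
  have hderiv (t : ℝ) (ht : x ≤ t) : HasDerivAt
      (fun t ↦ C / (n + 1) * (x⁻¹ ^ (n + 1) - t⁻¹ ^ (n + 1))) (C * t⁻¹ ^ (n + 2)) t := by
    have ht0 : t ≠ 0 := (hx.trans_le ht).ne'
    refine ((((hasDerivAt_inv ht0).pow (n + 1)).const_sub _).const_mul _).congr_deriv ?_
    have hn : (n : ℝ) + 1 ≠ 0 := n.cast_add_one_ne_zero
    rw [Nat.add_sub_cancel]
    push_cast
    simp only [inv_pow]
    field_simp
    ring
  have hsub (t : ℝ) (ht : x ≤ t) : HasDerivAt (fun t ↦ f t - f x) (f' t) t :=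
    (hf t ht).sub_const _
  refine image_norm_le_of_norm_deriv_right_le_deriv_boundary' (a := x) (b := y)
    (f := fun t ↦ f t - f x) (f' := f')
    (fun t ht ↦ (hsub t ht.1).continuousAt.continuousWithinAt)
    (fun t ht ↦ (hsub t ht.1).hasDerivWithinAt) ?_
    (fun t ht ↦ (hderiv t ht.1).continuousAt.continuousWithinAt)
    (fun t ht ↦ (hderiv t ht.1).hasDerivWithinAt) (fun t ht ↦ hC t ht.1) ⟨hxy, le_rfl⟩
  simp

theorem isBigO_sub_of_hasDerivAt_of_tendsto {E : Type*} [NormedAddCommGroup E] [NormedSpace ℝ E]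
    {f f' : ℝ → E} {K : E} {n : ℕ} (hf : ∀ᶠ x in atTop, HasDerivAt f (f' x) x)
    (hf' : f' =O[atTop] fun x ↦ x⁻¹ ^ (n + 2)) (hK : Tendsto f atTop (𝓝 K)) :
    (fun x ↦ f x - K) =O[atTop] fun x ↦ x⁻¹ ^ (n + 1) := by
  obtain ⟨C, hC0, hC⟩ := hf'.exists_nonneg
  refine IsBigO.of_bound (C / (n + 1)) ?_
  filter_upwards [eventually_forall_ge_atTop.2 hf, eventually_forall_ge_atTop.2 hC.bound,
    eventually_gt_atTop 0] with x hfx hCx hx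
  have hbound (y : ℝ) (hxy : x ≤ y) : ‖f y - f x‖ ≤ C / (n + 1) * x⁻¹ ^ (n + 1) := by
    have hy : 0 < y := hx.trans_le hxy
    have hCt (t : ℝ) (ht : x ≤ t) : ‖f' t‖ ≤ C * t⁻¹ ^ (n + 2) := by
      have ht0 : 0 < t := hx.trans_le ht
      simpa [abs_of_pos ht0] using hCx t ht
    refine (norm_sub_le_of_norm_deriv_le_inv_pow hx hxy hfx hCt).trans ?_
    gcongr
    exact sub_le_self _ (by positivity)
  rw [norm_sub_rev, Real.norm_of_nonneg (by positivity)]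
  exact le_of_tendsto (hK.sub_const _).norm ((eventually_ge_atTop x).mono hbound)

end Integration

section PoissonTail

variable {x : ℝ}

theorem pow_div_factorial_le_floor (hx : 0 ≤ x) (i : ℕ) :
    x ^ i / i.factorial ≤ x ^ ⌊x⌋₊ / (⌊x⌋₊).factorial := by
  rw [div_le_div_iff₀ (by positivity) (by positivity)]
  rcases le_total ⌊x⌋₊ i with h | h
  · obtain ⟨j, rfl⟩ := Nat.exists_eq_add_of_le h
    have hpow : x ^ j * (⌊x⌋₊).factorial ≤ (⌊x⌋₊ + j).factorial := by
      calc x ^ j * (⌊x⌋₊).factorial ≤ (⌊x⌋₊ + 1 : ℝ) ^ j * (⌊x⌋₊).factorial := by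
            gcongr
            exact (Nat.lt_floor_add_one x).le
        _ ≤ (⌊x⌋₊ + j).factorial := by
            rw [mul_comm]
            exact_mod_cast Nat.factorial_mul_pow_le_factorial
    rw [pow_add, mul_assoc]
    gcongr
  · obtain ⟨j, hj⟩ := Nat.exists_eq_add_of_le h
    have hpow : ((⌊x⌋₊).factorial : ℝ) ≤ x ^ j * i.factorial := by
      calc ((⌊x⌋₊).factorial : ℝ) = i.factorial * (⌊x⌋₊.descFactorial j : ℕ) := by
            have hi : ⌊x⌋₊ - j = i := by omega
            rw [← Nat.factorial_mul_descFactorial (k := j) (by omega), hi]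
            push_cast
            rfl
        _ ≤ i.factorial * (⌊x⌋₊ : ℝ) ^ j := by
            gcongr
            exact_mod_cast Nat.descFactorial_le_pow _ _
        _ ≤ x ^ j * i.factorial := by
            rw [mul_comm]
            gcongr
            exact Nat.floor_le hx
    have hsplit : x ^ ⌊x⌋₊ = x ^ i * x ^ j := by rw [← pow_add, ← hj]
    rw [hsplit, mul_assoc]
    gcongr

/-- Exponential tilting: the bound by the mode, applied to the mean `x * exp θ`. -/
theorem pow_div_factorial_le_exp_mul (hx : 0 ≤ x) (θ : ℝ) (i : ℕ) :
    x ^ i / i.factorial ≤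
      Real.exp (θ * (⌊x * Real.exp θ⌋₊ - i)) * (x ^ ⌊x⌋₊ / (⌊x⌋₊).factorial) := by
  set j := ⌊x * Real.exp θ⌋₊
  have htilt (n : ℕ) : x ^ n / n.factorial =
      Real.exp (-(θ * n)) * ((x * Real.exp θ) ^ n / n.factorial) := by
    rw [mul_pow, ← Real.exp_nat_mul, mul_comm (n : ℝ) θ, Real.exp_neg]
    field_simp
  calc x ^ i / i.factorial
      = Real.exp (-(θ * i)) * ((x * Real.exp θ) ^ i / i.factorial) := htilt i
    _ ≤ Real.exp (-(θ * i)) * ((x * Real.exp θ) ^ j / j.factorial) := by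
      gcongr ?_ * ?_
      exact pow_div_factorial_le_floor (by positivity) i
    _ = Real.exp (θ * (j - i)) * (x ^ j / j.factorial) := by
      rw [htilt j, ← mul_assoc, ← Real.exp_add]
      ring_nf
    _ ≤ Real.exp (θ * (j - i)) * (x ^ ⌊x⌋₊ / (⌊x⌋₊).factorial) := by
      gcongr ?_ * ?_
      exact pow_div_factorial_le_floor hx j

theorem abs_floor_mul_exp_sub_le {θ : ℝ} (hx : 0 ≤ x) (hθ : |θ| ≤ 1) :
    |(⌊x * Real.exp θ⌋₊ : ℝ) - x| ≤ 1 + x * (|θ| + |θ| ^ 2) := by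
  have hfloor : |(⌊x * Real.exp θ⌋₊ : ℝ) - x * Real.exp θ| ≤ 1 := by
    have hle := Nat.floor_le (show 0 ≤ x * Real.exp θ by positivity)
    have hlt := Nat.lt_floor_add_one (x * Real.exp θ)
    rw [abs_le]
    constructor <;> linarith
  have hexp : |Real.exp θ - 1| ≤ |θ| + |θ| ^ 2 := by
    calc |Real.exp θ - 1| = |θ + (Real.exp θ - 1 - θ)| := by ring_nf
      _ ≤ |θ| + |Real.exp θ - 1 - θ| := abs_add_le _ _
      _ ≤ |θ| + |θ| ^ 2 := by
        rw [sq_abs]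
        gcongr
        exact Real.abs_exp_sub_one_sub_id_le hθ
  calc |(⌊x * Real.exp θ⌋₊ : ℝ) - x|
      = |(⌊x * Real.exp θ⌋₊ - x * Real.exp θ) + x * (Real.exp θ - 1)| := by ring_nf
    _ ≤ |(⌊x * Real.exp θ⌋₊ : ℝ) - x * Real.exp θ| + |x * (Real.exp θ - 1)| := abs_add_le _ _
    _ ≤ 1 + x * (|θ| + |θ| ^ 2) := by
      rw [abs_mul, abs_of_nonneg hx]
      gcongr

theorem pow_div_factorial_le_exp_sub_abs_mul (hx : 1 ≤ x) (i : ℕ) :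
    x ^ i / i.factorial ≤
      Real.exp (3 - |(i - x) / √x|) * (x ^ ⌊x⌋₊ / (⌊x⌋₊).factorial) := by
  have hx0 : 0 < x := by positivity
  have hsqrt : 1 ≤ √x := Real.one_le_sqrt.2 hx
  obtain ⟨θ, hθ, hsign⟩ : ∃ θ : ℝ, |θ| = (√x)⁻¹ ∧ θ * (x - i) = -|(i - x) / √x| := by
    rcases abs_cases ((i - x) / √x) with ⟨h, -⟩ | ⟨h, -⟩
    · exact ⟨(√x)⁻¹, abs_of_pos (by positivity), by rw [h]; ring⟩
    · exact ⟨-(√x)⁻¹, by rw [abs_neg, abs_of_pos (by positivity)], by rw [h]; ring⟩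
  have hθ1 : |θ| ≤ 1 := hθ ▸ inv_le_one_of_one_le₀ hsqrt
  have hxθ : x * |θ| ^ 2 = 1 := by
    rw [hθ, inv_pow, Real.sq_sqrt hx0.le, mul_inv_cancel₀ hx0.ne']
  have hshift : θ * (⌊x * Real.exp θ⌋₊ - x) ≤ 3 := by
    calc θ * (⌊x * Real.exp θ⌋₊ - x) ≤ |θ| * |⌊x * Real.exp θ⌋₊ - x| := by
          rw [← abs_mul]
          exact le_abs_self _
      _ ≤ |θ| * (1 + x * (|θ| + |θ| ^ 2)) := by
          gcongr
          exact abs_floor_mul_exp_sub_le hx0.le hθ1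
      _ = |θ| + x * |θ| ^ 2 + |θ| * (x * |θ| ^ 2) := by ring
      _ ≤ 3 := by rw [hxθ]; linarith
  refine (pow_div_factorial_le_exp_mul hx0.le θ i).trans ?_
  gcongr ?_ * ?_
  refine Real.exp_le_exp.2 ?_
  linarith

end PoissonTail

section LocalLimit

theorem isBigO_sub_one_add_mul_log_one_add :
    (fun u : ℝ ↦ u - (1 + u) * Real.log (1 + u) + u ^ 2 / 2) =O[𝓝 0] fun u ↦ u ^ 3 := by
  refine IsBigO.of_bound (7 / 2) ?_
  filter_upwards [Metric.ball_mem_nhds (0 : ℝ) (half_pos one_pos)] with u hu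
  rw [mem_ball_zero_iff, Real.norm_eq_abs] at hu
  have hlog : |Real.log (1 + u) - u + u ^ 2 / 2| ≤ 2 * |u| ^ 3 := by
    have hTaylor := Real.abs_log_sub_add_sum_range_le (x := -u) (by rw [abs_neg]; linarith) 2
    rw [abs_neg] at hTaylor
    calc |Real.log (1 + u) - u + u ^ 2 / 2|
        = |∑ i ∈ range 2, (-u) ^ (i + 1) / ((i : ℝ) + 1) + Real.log (1 - -u)| := by
          simp only [sum_range_succ, sum_range_zero]
          norm_num
          ring_nf
      _ ≤ |u| ^ 3 / (1 - |u|) := hTaylor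
      _ ≤ 2 * |u| ^ 3 := by
          rw [div_le_iff₀ (by linarith)]
          nlinarith [pow_nonneg (abs_nonneg u) 3]
  have hone : |1 + u| ≤ 3 / 2 := by
    rw [abs_le]
    constructor <;> linarith [abs_le.1 hu.le]
  rw [Real.norm_eq_abs, Real.norm_eq_abs, abs_pow]
  calc |u - (1 + u) * Real.log (1 + u) + u ^ 2 / 2|
      = |u ^ 3 / 2 - (1 + u) * (Real.log (1 + u) - u + u ^ 2 / 2)| := by ring_nf
    _ ≤ |u ^ 3 / 2| + |1 + u| * |Real.log (1 + u) - u + u ^ 2 / 2| := by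
      rw [← abs_mul]
      exact abs_sub _ _
    _ ≤ |u| ^ 3 / 2 + 3 / 2 * (2 * |u| ^ 3) := by
      rw [abs_div, abs_pow, abs_two]
      gcongr
    _ = 7 / 2 * |u| ^ 3 := by ring

variable {k : ℝ → ℝ} {t : ℝ}

theorem tendsto_div_self_of_tendsto_div_sqrt
    (hk : Tendsto (fun x ↦ (k x - x) / √x) atTop (𝓝 t)) :
    Tendsto (fun x ↦ (k x - x) / x) atTop (𝓝 0) := by
  have h := hk.mul (tendsto_inv_atTop_zero.comp Real.tendsto_sqrt_atTop)
  rw [mul_zero] at h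
  refine h.congr' ?_
  filter_upwards [eventually_gt_atTop 0] with x hx
  rw [Function.comp_apply, ← div_eq_mul_inv, div_div, Real.mul_self_sqrt hx.le]

theorem tendsto_sub_sub_mul_log_div (hk : Tendsto (fun x ↦ (k x - x) / √x) atTop (𝓝 t)) :
    Tendsto (fun x ↦ k x - x - k x * Real.log (k x / x)) atTop (𝓝 (-t ^ 2 / 2)) := by
  set u : ℝ → ℝ := fun x ↦ (k x - x) / x with hu
  have hu0 : Tendsto u atTop (𝓝 0) := tendsto_div_self_of_tendsto_div_sqrt hk
  have hxu : Tendsto (fun x ↦ x * u x ^ 2) atTop (𝓝 (t ^ 2)) := by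
    refine (hk.pow 2).congr' ?_
    filter_upwards [eventually_gt_atTop 0] with x hx
    rw [div_pow, Real.sq_sqrt hx.le, hu]
    field_simp
  have hrem : Tendsto
      (fun x ↦ x * (u x - (1 + u x) * Real.log (1 + u x) + u x ^ 2 / 2)) atTop (𝓝 0) := by
    refine ((isBigO_refl (fun x : ℝ ↦ x) atTop).mul
      (isBigO_sub_one_add_mul_log_one_add.comp_tendsto hu0)).trans_tendsto ?_
    refine (mul_zero (t ^ 2) ▸ hxu.mul hu0).congr fun x ↦ ?_
    rw [Function.comp_apply]
    ring
  have hlim := hrem.sub (hxu.div_const 2)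
  rw [zero_sub, ← neg_div] at hlim
  refine hlim.congr' ?_
  filter_upwards [eventually_gt_atTop 0] with x hx
  have hone : 1 + u x = k x / x := by rw [hu]; field_simp; ring
  rw [hone, hu]
  field_simp
  ring

end LocalLimit

section PoissonLocalLimit

theorem scaled_pow_div_factorial_eq_stirlingSeq {x : ℝ} {k : ℕ} (hx : 0 < x) (hk : k ≠ 0) :
    √x * Real.exp (-x) * (x ^ k / k.factorial) =
      (√(2 * (k / x)) * Stirling.stirlingSeq k)⁻¹ * Real.exp (k - x - k * Real.log (k / x)) := by
  have hexp : Real.exp (k - x - k * Real.log (k / x)) =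
      Real.exp 1 ^ k * Real.exp (-x) * (x / k) ^ k := by
    rw [← inv_div x, Real.log_inv, ← Real.exp_nat_mul, mul_one, mul_neg, sub_neg_eq_add,
      sub_eq_add_neg, Real.exp_add, Real.exp_add, mul_comm (k : ℝ), Real.exp_mul,
      Real.exp_log (by positivity), Real.rpow_natCast]
  have hsqrt : √(2 * (k / x)) = √(2 * k) / √x := by rw [← mul_div_assoc, Real.sqrt_div' _ hx.le]
  rw [hexp, hsqrt, Stirling.stirlingSeq, div_pow, div_pow]
  field_simp

theorem tendsto_scaled_pow_div_factorial {k : ℝ → ℕ} {t : ℝ}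
    (hk : Tendsto (fun x ↦ (k x - x) / √x) atTop (𝓝 t)) :
    Tendsto (fun x ↦ √x * Real.exp (-x) * (x ^ k x / (k x).factorial)) atTop
      (𝓝 ((√(2 * Real.pi))⁻¹ * Real.exp (-t ^ 2 / 2))) := by
  have hratio : Tendsto (fun x ↦ (k x : ℝ) / x) atTop (𝓝 1) := by
    have h := (tendsto_div_self_of_tendsto_div_sqrt hk).add_const 1
    rw [zero_add] at h
    refine h.congr' ?_
    filter_upwards [eventually_ne_atTop 0] with x hx
    field_simp
    ring
  have hk_atTop : Tendsto k atTop atTop := by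
    refine tendsto_natCast_atTop_iff (R := ℝ).1 ?_
    refine (tendsto_id.atTop_mul_pos one_pos hratio).congr' ?_
    filter_upwards [eventually_ne_atTop 0] with x hx
    exact mul_div_cancel₀ _ hx
  have hstirling : Tendsto (fun x ↦ (√(2 * (k x / x)) * Stirling.stirlingSeq (k x))⁻¹) atTop
      (𝓝 (√(2 * Real.pi))⁻¹) := by
    have h := (((hratio.const_mul 2).sqrt).mul
      (Stirling.tendsto_stirlingSeq_sqrt_pi.comp hk_atTop)).inv₀ (by positivity)
    rwa [mul_one, ← Real.sqrt_mul two_pos.le] at h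
  refine (hstirling.mul (tendsto_sub_sub_mul_log_div hk).rexp).congr' ?_
  filter_upwards [eventually_gt_atTop 0, hk_atTop.eventually_ne_atTop 0] with x hx hkx
  exact (scaled_pow_div_factorial_eq_stirlingSeq hx hkx).symm

theorem eventually_add_mul_sqrt_nonneg (t : ℝ) : ∀ᶠ x : ℝ in atTop, 0 ≤ x + t * √x := by
  filter_upwards [eventually_ge_atTop (t ^ 2)] with x hx
  have hx0 : 0 ≤ x := (sq_nonneg t).trans hx
  have hsqrt : |t| ≤ √x := Real.abs_le_sqrt hx
  nlinarith [Real.mul_self_sqrt hx0, Real.sqrt_nonneg x, neg_abs_le t, hsqrt]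

theorem tendsto_floor_add_mul_sqrt_sub_div_sqrt (t : ℝ) :
    Tendsto (fun x ↦ ((⌊x + t * √x⌋₊ : ℝ) - x) / √x) atTop (𝓝 t) := by
  have hinv : Tendsto (fun x : ℝ ↦ (√x)⁻¹) atTop (𝓝 0) :=
    tendsto_inv_atTop_zero.comp Real.tendsto_sqrt_atTop
  refine tendsto_of_tendsto_of_tendsto_of_le_of_le' (sub_zero t ▸ hinv.const_sub t)
    tendsto_const_nhds ?_ ?_
  · filter_upwards [eventually_gt_atTop 0] with x hx
    rw [le_div_iff₀ (by positivity), sub_mul, inv_mul_cancel₀ (by positivity)]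
    linarith [Nat.lt_floor_add_one (x + t * √x)]
  · filter_upwards [eventually_gt_atTop 0, eventually_add_mul_sqrt_nonneg t] with x hx hx'
    rw [div_le_iff₀ (by positivity)]
    linarith [Nat.floor_le hx']

theorem eventually_scaled_pow_div_factorial_le :
    ∃ C > 0, ∀ᶠ x : ℝ in atTop, ∀ i : ℕ, √x * Real.exp (-x) * (x ^ i / i.factorial) ≤
      C * Real.exp (-|(i - x) / √x|) := by
  have hmode := tendsto_scaled_pow_div_factorial (tendsto_floor_add_mul_sqrt_sub_div_sqrt 0)
  simp only [zero_mul, add_zero] at hmode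
  obtain ⟨C, hC⟩ := hmode.isBoundedUnder_le.eventually_le
  refine ⟨max C 1 * Real.exp 3, by positivity, ?_⟩
  filter_upwards [hC, eventually_ge_atTop 1] with x hCx hx i
  calc √x * Real.exp (-x) * (x ^ i / i.factorial)
      ≤ √x * Real.exp (-x) *
          (Real.exp (3 - |(i - x) / √x|) * (x ^ ⌊x⌋₊ / (⌊x⌋₊).factorial)) := by
        gcongr ?_ * ?_
        exact pow_div_factorial_le_exp_sub_abs_mul hx i
    _ = √x * Real.exp (-x) * (x ^ ⌊x⌋₊ / (⌊x⌋₊).factorial) *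
          (Real.exp 3 * Real.exp (-|(i - x) / √x|)) := by
        rw [sub_eq_add_neg, Real.exp_add]
        ring
    _ ≤ max C 1 * (Real.exp 3 * Real.exp (-|(i - x) / √x|)) := by
        gcongr ?_ * ?_
        exact hCx.trans (le_max_left _ _)
    _ = max C 1 * Real.exp 3 * Real.exp (-|(i - x) / √x|) := by ring

end PoissonLocalLimit

section FloorIntegral

theorem hasSum_setIntegral_Ici_natFloor {E : Type*} [NormedAddCommGroup E] [NormedSpace ℝ E]
    [CompleteSpace E] {G : ℕ → E} (hG : Summable fun k ↦ ‖G k‖) :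
    HasSum G (∫ s in Set.Ici (0 : ℝ), G ⌊s⌋₊) := by
  have hunion : ⋃ k : ℕ, Ico (k : ℝ) (k + 1 : ℕ) = Set.Ici 0 := by
    simpa using iUnion_Ico_map_succ_eq_Ici (f := ((↑) : ℕ → ℝ)) (fun k ↦ by simp)
      (not_bddAbove_of_tendsto_atTop tendsto_natCast_atTop_atTop)
  have hconst (k : ℕ) : EqOn (fun s : ℝ ↦ G ⌊s⌋₊) (fun _ ↦ G k) (Ico (k : ℝ) (k + 1 : ℕ)) :=
    fun s hs ↦ congrArg G (Nat.floor_eq_on_Ico k s (by exact_mod_cast hs))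
  have hint : IntegrableOn (fun s : ℝ ↦ G ⌊s⌋₊) (⋃ k : ℕ, Ico (k : ℝ) (k + 1 : ℕ)) := by
    refine integrableOn_iUnion_of_summable_integral_norm (fun k ↦ ?_) ?_
    · exact (integrableOn_const (by simp)).congr_fun (hconst k).symm measurableSet_Ico
    · refine hG.congr fun k ↦ ?_
      rw [setIntegral_congr_fun measurableSet_Ico fun s hs ↦ congrArg norm (hconst k hs)]
      simp
  have hsum := hasSum_integral_iUnion (fun _ ↦ measurableSet_Ico)
    Nat.mono_cast.pairwise_disjoint_on_Ico_succ hint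
  simp only [Order.succ_eq_add_one, hunion] at hsum
  refine hsum.congr_fun fun k ↦ ?_
  rw [setIntegral_congr_fun measurableSet_Ico (hconst k)]
  simp

end FloorIntegral

section LeadingOrder

variable {ν x : ℝ}

theorem integrable_exp_neg_mul_abs {b : ℝ} (hb : 0 < b) :
    Integrable fun t : ℝ ↦ Real.exp (-b * |t|) := by
  rw [← integrableOn_univ, ← Iic_union_Ioi (a := (0 : ℝ)), integrableOn_union]
  refine ⟨(integrableOn_exp_mul_Iic hb 0).congr_fun (fun t ht ↦ ?_) measurableSet_Iic,
    (integrableOn_exp_mul_Ioi (neg_neg_of_pos hb) 0).congr_fun (fun t ht ↦ ?_) measurableSet_Ioi⟩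
  · simp only [abs_of_nonpos (Set.mem_Iic.1 ht), neg_mul_neg]
  · simp only [abs_of_pos (Set.mem_Ioi.1 ht)]

theorem integral_gaussian_density_rpow (hν : 0 < ν) :
    ∫ t : ℝ, ((√(2 * Real.pi))⁻¹ * Real.exp (-t ^ 2 / 2)) ^ ν =
      ((2 * Real.pi) ^ ((ν - 1) / 2) * √ν)⁻¹ := by
  have hrpow (t : ℝ) : ((√(2 * Real.pi))⁻¹ * Real.exp (-t ^ 2 / 2)) ^ ν =
      ((2 * Real.pi) ^ (ν / 2))⁻¹ * Real.exp (-(ν / 2) * t ^ 2) := by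
    rw [Real.mul_rpow (by positivity) (by positivity), ← Real.exp_mul,
      Real.inv_rpow (by positivity), Real.sqrt_eq_rpow, ← Real.rpow_mul (by positivity)]
    ring_nf
  have hsqrt : √(Real.pi / (ν / 2)) = (2 * Real.pi) ^ (1 / 2 : ℝ) / √ν := by
    rw [← Real.sqrt_eq_rpow, ← Real.sqrt_div' _ hν.le]
    congr 1
    field_simp
  simp only [hrpow, integral_const_mul, integral_gaussian, hsqrt]
  rw [sub_div, Real.rpow_sub (by positivity)]
  field_simp

theorem tsum_cmpWeight_eq_sqrt_mul_integral (hν : 0 < ν) (hx : 0 < x) :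
    ∑' i, cmpWeight ν x i =
      √x * ∫ t, (Set.Ici 0).indicator (fun s ↦ cmpWeight ν x ⌊s⌋₊) (x + t * √x) := by
  set F : ℝ → ℝ := (Set.Ici 0).indicator fun s ↦ cmpWeight ν x ⌊s⌋₊ with hF
  have hsubst : ∫ t, F (x + t * √x) = (√x)⁻¹ * ∫ s, F s := by
    rw [Measure.integral_comp_mul_right (fun s ↦ F (x + s)), integral_add_left_eq_self F x,
      abs_of_pos (by positivity), smul_eq_mul]
  rw [hsubst, mul_inv_cancel_left₀ (by positivity), hF, integral_indicator measurableSet_Ici]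
  exact (hasSum_setIntegral_Ici_natFloor (summable_cmpWeight hν hx).norm).tsum_eq

theorem abs_sub_one_le_abs_floor_sub_div_sqrt {t : ℝ} (hx : 1 ≤ x) (ht : 0 ≤ x + t * √x) :
    |t| - 1 ≤ |((⌊x + t * √x⌋₊ : ℝ) - x) / √x| := by
  have hsqrt : 1 ≤ √x := Real.one_le_sqrt.2 hx
  have hdist : |t - ((⌊x + t * √x⌋₊ : ℝ) - x) / √x| ≤ 1 := by
    rw [sub_div' (by positivity), abs_div, abs_of_pos (by positivity : 0 < √x),
      div_le_one (by positivity), abs_le]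
    constructor <;> linarith [Nat.floor_le ht, Nat.lt_floor_add_one (x + t * √x)]
  linarith [abs_sub_abs_le_abs_sub t (((⌊x + t * √x⌋₊ : ℝ) - x) / √x)]

/-- The CMP weights as a density in the variable `t = (s - x) / √x`, with the normalization of the
Poisson local limit theorem. -/
noncomputable def cmpProfile (ν x t : ℝ) : ℝ :=
  (√x * Real.exp (-x)) ^ ν *
    (Set.Ici 0).indicator (fun s ↦ cmpWeight ν x ⌊s⌋₊) (x + t * √x)

theorem cmpProfile_of_nonneg {t : ℝ} (hx : 0 ≤ x) (ht : 0 ≤ x + t * √x) :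
    cmpProfile ν x t = (√x * Real.exp (-x) *
      (x ^ ⌊x + t * √x⌋₊ / (⌊x + t * √x⌋₊).factorial)) ^ ν := by
  rw [cmpProfile, indicator_of_mem (Set.mem_Ici.2 ht), cmpWeight,
    ← Real.mul_rpow (by positivity) (by positivity)]

theorem cmpProfile_of_neg {t : ℝ} (ht : x + t * √x < 0) : cmpProfile ν x t = 0 := by
  rw [cmpProfile, indicator_of_notMem (by simpa using ht), mul_zero]

theorem measurable_cmpProfile (ν x : ℝ) : Measurable (cmpProfile ν x) := by
  have hfloor : Measurable fun s : ℝ ↦ cmpWeight ν x ⌊s⌋₊ :=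
    (measurable_from_nat (f := cmpWeight ν x)).comp Nat.measurable_floor
  exact ((hfloor.indicator measurableSet_Ici).comp (by fun_prop)).const_mul _

theorem integral_cmpProfile (hν : 0 < ν) (hx : 0 < x) :
    ∫ t, cmpProfile ν x t =
      (√x * Real.exp (-x)) ^ ν * ((√x)⁻¹ * ∑' i, cmpWeight ν x i) := by
  rw [tsum_cmpWeight_eq_sqrt_mul_integral hν hx, inv_mul_cancel_left₀ (by positivity)]
  exact integral_const_mul _ _

theorem tendsto_cmpProfile (hν : 0 ≤ ν) (t : ℝ) :
    Tendsto (fun x ↦ cmpProfile ν x t) atTop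
      (𝓝 (((√(2 * Real.pi))⁻¹ * Real.exp (-t ^ 2 / 2)) ^ ν)) := by
  refine ((tendsto_scaled_pow_div_factorial (tendsto_floor_add_mul_sqrt_sub_div_sqrt t)).rpow_const
    (Or.inr hν)).congr' ?_
  filter_upwards [eventually_ge_atTop 0, eventually_add_mul_sqrt_nonneg t] with x hx ht
  exact (cmpProfile_of_nonneg hx ht).symm

theorem eventually_norm_cmpProfile_le (hν : 0 < ν) :
    ∃ C, ∀ᶠ x in atTop, ∀ t, ‖cmpProfile ν x t‖ ≤ C * Real.exp (-ν * |t|) := by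
  obtain ⟨C, hC0, hC⟩ := eventually_scaled_pow_div_factorial_le
  refine ⟨(C * Real.exp 1) ^ ν, ?_⟩
  filter_upwards [hC, eventually_ge_atTop 1] with x hCx hx t
  rcases lt_or_ge (x + t * √x) 0 with ht | ht
  · rw [cmpProfile_of_neg ht, norm_zero]
    positivity
  have hx0 : 0 ≤ x := by positivity
  rw [cmpProfile_of_nonneg hx0 ht, Real.norm_of_nonneg (by positivity)]
  calc (√x * Real.exp (-x) * (x ^ ⌊x + t * √x⌋₊ / (⌊x + t * √x⌋₊).factorial)) ^ ν
      ≤ (C * Real.exp (1 - |t|)) ^ ν := by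
        refine Real.rpow_le_rpow (by positivity) ((hCx _).trans ?_) hν.le
        gcongr
        linarith [abs_sub_one_le_abs_floor_sub_div_sqrt hx ht]
    _ = (C * Real.exp 1) ^ ν * Real.exp (-ν * |t|) := by
        rw [sub_eq_add_neg, Real.exp_add, ← mul_assoc,
          Real.mul_rpow (by positivity) (by positivity), ← Real.exp_mul]
        ring_nf

theorem tendsto_integral_cmpProfile (hν : 0 < ν) :
    Tendsto (fun x ↦ ∫ t, cmpProfile ν x t) atTop
      (𝓝 ((2 * Real.pi) ^ ((ν - 1) / 2) * √ν)⁻¹) := by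
  obtain ⟨C, hC⟩ := eventually_norm_cmpProfile_le hν
  rw [← integral_gaussian_density_rpow hν]
  exact tendsto_integral_filter_of_dominated_convergence (fun t ↦ C * Real.exp (-ν * |t|))
    (Eventually.of_forall fun x ↦ (measurable_cmpProfile ν x).aestronglyMeasurable)
    (hC.mono fun x hx ↦ Eventually.of_forall hx) ((integrable_exp_neg_mul_abs hν).const_mul C)
    (Eventually.of_forall (tendsto_cmpProfile hν.le))

theorem tendsto_log_tsum_cmpWeight (hν : 0 < ν) :
    Tendsto (fun x ↦ Real.log (∑' i, cmpWeight ν x i) - ν * x + (ν - 1) / 2 * Real.log x) atTop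
      (𝓝 (-Real.log ((2 * Real.pi) ^ ((ν - 1) / 2) * √ν))) := by
  rw [← Real.log_inv]
  refine ((tendsto_integral_cmpProfile hν).log (by positivity)).congr' ?_
  filter_upwards [eventually_gt_atTop 0] with x hx
  have hsqrt : √x ≠ 0 := by positivity
  rw [integral_cmpProfile hν hx, Real.log_mul (by positivity)
    (mul_pos (by positivity) (tsum_cmpWeight_pos hν hx)).ne',
    Real.log_mul (inv_ne_zero hsqrt) (tsum_cmpWeight_pos hν hx).ne', Real.log_inv,
    Real.log_rpow (by positivity), Real.log_mul hsqrt (Real.exp_ne_zero _), Real.log_exp,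
    Real.log_sqrt hx.le]
  ring

end LeadingOrder

section Expansion

variable {ν : ℝ}

theorem isBigO_log_tsum_cmpWeight_sub (hν : 0 < ν) :
    (fun x ↦ Real.log (∑' i, cmpWeight ν x i) - ν * x + (ν - 1) / 2 * Real.log x
        + Real.log ((2 * Real.pi) ^ ((ν - 1) / 2) * √ν)
        - (ν ^ 2 - 1) / (24 * ν) * x⁻¹ - (ν ^ 2 - 1) / (48 * ν ^ 2) * x⁻¹ ^ 2)
      =O[atTop] fun x ↦ x⁻¹ ^ 3 := by
  set c₁ := (ν ^ 2 - 1) / (24 * ν) with hc₁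
  set c₂ := (ν ^ 2 - 1) / (48 * ν ^ 2) with hc₂
  have hderiv : ∀ᶠ x in atTop, HasDerivAt
      (fun x ↦ Real.log (∑' i, cmpWeight ν x i) - ν * x + (ν - 1) / 2 * Real.log x
        - c₁ * x⁻¹ - c₂ * x⁻¹ ^ 2)
      (ν * (cmpMoment ν x 1 - ((1 / (2 * ν) - 1 / 2) * x⁻¹ + (1 / (24 * ν ^ 2) - 1 / 24) * x⁻¹ ^ 2
        + (1 / (24 * ν ^ 3) - 1 / (24 * ν)) * x⁻¹ ^ 3))) x := by
    filter_upwards [eventually_gt_atTop 0] with x hx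
    have hinv := hasDerivAt_inv hx.ne'
    refine (((((hasDerivAt_log_tsum_cmpWeight hν hx).sub ((hasDerivAt_id x).const_mul ν)).add
      ((Real.hasDerivAt_log hx.ne').const_mul ((ν - 1) / 2))).sub (hinv.const_mul c₁)).sub
      ((hinv.pow 2).const_mul c₂)).congr_deriv ?_
    simp only [hc₁, hc₂, Nat.reduceSub, pow_one]
    field_simp
    ring
  have hlim : Tendsto
      (fun x ↦ Real.log (∑' i, cmpWeight ν x i) - ν * x + (ν - 1) / 2 * Real.log x
        - c₁ * x⁻¹ - c₂ * x⁻¹ ^ 2) atTop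
      (𝓝 (-Real.log ((2 * Real.pi) ^ ((ν - 1) / 2) * √ν))) := by
    have hinv : Tendsto (fun x : ℝ ↦ x⁻¹) atTop (𝓝 0) := tendsto_inv_atTop_zero
    simpa using ((tendsto_log_tsum_cmpWeight hν).sub (hinv.const_mul c₁)).sub
      ((hinv.pow 2).const_mul c₂)
  refine (isBigO_sub_of_hasDerivAt_of_tendsto hderiv
    ((isBigO_cmpMoment_one_sub hν).const_mul_left ν) hlim).congr_left fun x ↦ ?_
  ring

end Expansion

/-- Asymptotic expansion of `ln Z(λ,ν)`:
`ln Z(λ,ν) = ν λ^{1/ν} − ((ν−1)/(2ν)) ln λ − ln((2π)^{(ν−1)/2} √ν)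
  + ((ν²−1)/(24ν)) λ^{−1/ν} + ((ν²−1)/(48ν²)) λ^{−2/ν} + O(λ^{−3/ν})` as `λ → ∞`. -/
theorem log_cmpZ_asymptotic (ν : ℝ) (hν : 0 < ν) :
    ∃ C > (0 : ℝ), ∃ Λ > (0 : ℝ), ∀ lam : ℝ, lam ≥ Λ →
      |Real.log (cmpZ lam ν) - ν * lam ^ (1 / ν) + ((ν - 1) / (2 * ν)) * Real.log lam +
          Real.log ((2 * Real.pi) ^ ((ν - 1) / 2) * Real.sqrt ν) -
          ((ν ^ 2 - 1) / (24 * ν)) * lam ^ (-(1 / ν)) -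
          ((ν ^ 2 - 1) / (48 * ν ^ 2)) * lam ^ (-(2 / ν))|
        ≤ C * lam ^ (-(3 / ν)) := by
  obtain ⟨C, hC, hbound⟩ := (isBigO_log_tsum_cmpWeight_sub hν).exists_pos
  have hroot : Tendsto (fun lam : ℝ ↦ lam ^ (1 / ν)) atTop atTop :=
    tendsto_rpow_atTop (one_div_pos.2 hν)
  obtain ⟨Λ, hΛ⟩ := eventually_atTop.1 (hroot.eventually hbound.bound)
  refine ⟨C, hC, max Λ 1, by positivity, fun lam hlam ↦ ?_⟩
  have hlam0 : 0 < lam := one_pos.trans_le ((le_max_right _ _).trans hlam)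
  have hZ : cmpZ lam ν = ∑' i, cmpWeight ν (lam ^ (1 / ν)) i := by
    rw [← cmpZ_rpow (by positivity), ← Real.rpow_mul hlam0.le, one_div_mul_cancel hν.ne',
      Real.rpow_one]
  have hlog : (ν - 1) / (2 * ν) * Real.log lam = (ν - 1) / 2 * Real.log (lam ^ (1 / ν)) := by
    rw [Real.log_rpow hlam0]
    field_simp
  have hpow (k : ℕ) : lam ^ (-(k / ν)) = (lam ^ (1 / ν))⁻¹ ^ k := by
    rw [← Real.rpow_neg hlam0.le, ← Real.rpow_natCast, ← Real.rpow_mul hlam0.le]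
    ring_nf
  have h := hΛ lam ((le_max_left _ _).trans hlam)
  rw [Real.norm_eq_abs, Real.norm_of_nonneg (by positivity)] at h
  simpa only [hZ, hlog, Real.rpow_neg hlam0.le (1 / ν), ← hpow, Nat.cast_ofNat] using h
end
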